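/- arXiv:2102.00480 — 3 statements merged into one kernel-verified Lean document; each statement's English description precedes it below -/
import Mathlib

section
/- In the unitary case, the subgroup Γ = {a·σ(a)^{-1} : a ∈ (E'/E)_1} has index two in the group (E'/E)_1 ∩ (E'/F')_1, and the two G^j(E)-orbits in X^j are {x ∈ X^j : det x ∈ Γ} = G^j(E)·I_n and {x ∈ X^j : det x ∉ Γ}. -/
open Matrix

namespace GaloisPair

variable {E' : Type} [Field E']

/-- `g ∈ G^j(E) = {g ∈ GL_n(E') : τ(g)ᵀ j g = j}`. -/
def Gj {n : ℕ} (τ : E' → E') (j g : Matrix (Fin n) (Fin n) E') : Prop :=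
  IsUnit g ∧ (g.map τ)ᵀ * j * g = j

/-- `x ∈ X^j = {x ∈ G^j(E) : x·σ(x) = 1}`. -/
def Xj {n : ℕ} (σ τ : E' → E') (j x : Matrix (Fin n) (Fin n) E') : Prop :=
  Gj τ j x ∧ x * x.map σ = 1

/-- `x'` lies in the `G^j(E)`-orbit of `x` for twisted conjugation `g·x = g x σ(g)⁻¹`. -/
def orbGj {n : ℕ} (σ τ : E' → E') (j x x' : Matrix (Fin n) (Fin n) E') : Prop :=
  ∃ g, Gj τ j g ∧ x' = g * x * (g.map σ)⁻¹

/-- `y ∈ Y_n(F)`: invertible, entries fixed by `σ` (i.e. in `F'`), and `τ(y)ᵀ = ε • y`. -/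
def inYnF {n : ℕ} (σ τ : E' → E') (ε : E') (y : Matrix (Fin n) (Fin n) E') : Prop :=
  IsUnit y ∧ (∀ a b, σ (y a b) = y a b) ∧ (y.map τ)ᵀ = ε • y

/-- The subgroup `Γ = {a·σ(a)⁻¹ : a ∈ (E'/E)₁}` of `E'^×`, where
`(E'/E)₁ = {a : a·τ(a) = 1}`. -/
def Gam (σ τ : E' → E') : Set E' := {b | ∃ a : E', a * τ a = 1 ∧ b = a * (σ a)⁻¹}

/-- The group `(E'/E)₁ ∩ (E'/F')₁ = {a : a·τ(a) = 1 ∧ a·σ(a) = 1}`. -/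
def oneInter (σ τ : E' → E') : Set E' := {a | a * τ a = 1 ∧ a * σ a = 1}

end GaloisPair

open GaloisPair

/-!
If `x * σ(x) = 1`, then Hilbert 90 for matrices gives `x = z * σ(z)⁻¹`, and `z ↦ zᴴ * j * z`, where
`zᴴ` is the `τ`-conjugate transpose, identifies the orbits in `X^j` with isometry classes of
nondegenerate hermitian forms for `F'/F`. Over a `p`-adic field every binary nondegenerate hermitian
form represents `1`, so such forms are classified by the discriminant modulo norms. On determinants
this says that `x` and `x'` are in one orbit exactly when `det x' / det x` lies in `Γ`, while
reflections realise every element of `(E'/E)₁ ∩ (E'/F')₁` as a determinant.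

The same twist `z ↦ z * σ(z)⁻¹` turns the index of `Γ` into an index of norm groups of quadratic
extensions, which is two because the quadratic Hilbert symbol over a `p`-adic field is
nondegenerate; that in turn is a count of square classes.
-/

section TwistedHomomorphisms

variable {A : Type*} [CommGroup A]

/-- The homomorphism `a ↦ a * s a`: the norm of a quadratic extension when `s` is the Galois
involution acting on its unit group. -/
def involNorm (s : A →* A) : A →* A := MonoidHom.id A * s

/-- The homomorphism `a ↦ a / s a` whose kernel is the group of fixed points of `s`. -/
def involTwist (s : A →* A) : A →* A := MonoidHom.id A / s

lemma involNorm_apply (s : A →* A) (a : A) : involNorm s a = a * s a := rfl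

lemma involTwist_apply (s : A →* A) (a : A) : involTwist s a = a / s a := rfl

lemma mem_ker_involNorm {s : A →* A} {a : A} : a ∈ (involNorm s).ker ↔ a * s a = 1 := Iff.rfl

lemma mem_ker_involTwist {s : A →* A} {a : A} : a ∈ (involTwist s).ker ↔ s a = a := by
  rw [MonoidHom.mem_ker, involTwist_apply, div_eq_one, eq_comm]

lemma involNorm_eq_sq {s : A →* A} {a : A} (ha : a ∈ (involTwist s).ker) :
    involNorm s a = a ^ 2 := by
  rw [involNorm_apply, mem_ker_involTwist.1 ha, sq]

lemma range_involNorm_le_ker_involTwist {s : A →* A} (hs : ∀ a, s (s a) = a) :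
    (involNorm s).range ≤ (involTwist s).ker := by
  rintro _ ⟨a, rfl⟩
  rw [mem_ker_involTwist, involNorm_apply, map_mul, hs, mul_comm]

lemma range_involTwist_le_ker_involNorm {s : A →* A} (hs : ∀ a, s (s a) = a) :
    (involTwist s).range ≤ (involNorm s).ker := by
  rintro _ ⟨a, rfl⟩
  rw [mem_ker_involNorm, involTwist_apply, map_div, hs, div_mul_div_cancel, div_self']

lemma relIndex_map_ker_inf_range (f g : A →* A) :
    (f.ker.map g).relIndex (f.ker ⊓ g.range) = (f.ker ⊔ g.ker).relIndex (f.comp g).ker := by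
  have hle : g.ker ≤ (f.comp g).ker := by
    rw [← MonoidHom.comap_ker]; exact g.ker_le_comap _
  rw [inf_comm, ← Subgroup.map_comap_eq, MonoidHom.comap_ker, Subgroup.relIndex_map_map,
    sup_eq_left.2 hle]

lemma relIndex_map_ker_symm {f g : A →* A} (hfg : f.comp g = g.comp f) :
    (f.ker.map g).relIndex (f.ker ⊓ g.range) = (g.ker.map f).relIndex (g.ker ⊓ f.range) := by
  rw [relIndex_map_ker_inf_range, relIndex_map_ker_inf_range, hfg, sup_comm]

lemma involNorm_comp_involTwist {s t : A →* A} (hst : ∀ a, s (t a) = t (s a)) :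
    (involNorm t).comp (involTwist s) = (involTwist s).comp (involNorm t) := by
  refine MonoidHom.ext fun a => ?_
  simp only [MonoidHom.comp_apply, involNorm_apply, involTwist_apply, map_mul, map_div, hst]
  exact mul_div_mul_comm a (t a) (s a) (t (s a))

/-- The `a` fixed by `t` whose `s`-norm is the `t`-norm of some point fixed by `s` form a proper
subgroup which contains the `t`-norms, hence equals them by `hindex`. It also contains every `c`
fixed by `s` and `t`, because `involNorm s c = c ^ 2 = involNorm t c`. -/
lemma ker_involTwist_inf_le_range_involNorm {s t : A →* A}
    (hs : ∀ a, s (s a) = a) (hst : ∀ a, s (t a) = t (s a))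
    (hindex : (involNorm t).range.relIndex (involTwist t).ker = 2)
    (hnot : ¬ (involTwist t).ker.map (involNorm s) ≤ (involTwist s).ker.map (involNorm t)) :
    (involTwist s).ker ⊓ (involTwist t).ker ≤ (involNorm t).range := by
  obtain ⟨_, ⟨a, ha, rfl⟩, hna⟩ := Set.not_subset.1 hnot
  have norm_mem : ∀ b ∈ (involNorm t).range,
      involNorm s b ∈ (involTwist s).ker.map (involNorm t) := by
    rintro _ ⟨b, rfl⟩
    refine ⟨involNorm s b, range_involNorm_le_ker_involTwist hs ⟨b, rfl⟩, ?_⟩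
    simp only [involNorm_apply, map_mul, hst]
    exact mul_mul_mul_comm _ _ _ _
  rintro c ⟨hcs, hct⟩
  by_contra hc
  have hac : a * c ∈ (involNorm t).range := by
    have h := Subgroup.mul_mem_iff_of_index_two hindex (a := ⟨a, ha⟩) (b := ⟨c, hct⟩)
    simp only [Subgroup.mem_subgroupOf, Subgroup.coe_mul] at h
    exact h.2 (iff_of_false (fun ha' => hna (norm_mem a ha')) hc)
  have hcc : involNorm s c ∈ (involTwist s).ker.map (involNorm t) :=
    ⟨c, hcs, by rw [involNorm_eq_sq hct, involNorm_eq_sq hcs]⟩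
  refine hna ?_
  have := norm_mem _ hac
  rw [map_mul] at this
  exact (Subgroup.mul_mem_cancel_right _ hcc).1 this

lemma relIndex_map_involTwist_ker_involNorm {s t : A →* A}
    (hs : ∀ a, s (s a) = a) (ht : ∀ a, t (t a) = a) (hst : ∀ a, s (t a) = t (s a))
    (h90 : (involNorm s).ker = (involTwist s).range)
    (hindex : (involNorm t).range.relIndex (involTwist t).ker = 2)
    (hnot : ¬ (involTwist t).ker.map (involNorm s) ≤ (involTwist s).ker.map (involNorm t)) :
    ((involNorm t).ker.map (involTwist s)).relIndex ((involNorm t).ker ⊓ (involNorm s).ker) =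
      ((involTwist s).ker.map (involNorm t)).relIndex
        ((involTwist s).ker ⊓ (involTwist t).ker) := by
  have hle := ker_involTwist_inf_le_range_involNorm hs hst hindex hnot
  have hfixed : (involTwist s).ker ⊓ (involNorm t).range =
      (involTwist s).ker ⊓ (involTwist t).ker :=
    le_antisymm (inf_le_inf_left _ (range_involNorm_le_ker_involTwist ht))
      (le_inf inf_le_left hle)
  rw [h90, relIndex_map_ker_symm (involNorm_comp_involTwist hst), hfixed]

lemma ker_involTwist_sup_range_involTwist {t : A →* A} (ht : ∀ a, t (t a) = a) :
    (involTwist t).ker ⊔ (involTwist t).range =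
      (involTwist t).ker ⊔ (powMonoidHom 2 : A →* A).range := by
  have sq_eq : ∀ a, a ^ 2 = involNorm t a * involTwist t a := fun a => by
    rw [involNorm_apply, involTwist_apply, mul_mul_div_cancel, sq]
  have norm_mem : ∀ a, involNorm t a ∈ (involTwist t).ker := fun a =>
    range_involNorm_le_ker_involTwist ht ⟨a, rfl⟩
  apply le_antisymm <;> refine sup_le le_sup_left ?_ <;> rintro _ ⟨a, rfl⟩
  · rw [← inv_mul_eq_iff_eq_mul.2 (sq_eq a)]
    exact Subgroup.mul_mem_sup (inv_mem (norm_mem a)) ⟨a, rfl⟩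
  · rw [powMonoidHom_apply, sq_eq]
    exact Subgroup.mul_mem_sup (norm_mem a) ⟨a, rfl⟩

lemma relIndex_map_sq_ker_involTwist {t : A →* A}
    (h90 : (involNorm t).ker = (involTwist t).range)
    (htorsion : (powMonoidHom 2 : A →* A).ker ≤ (involTwist t).ker) :
    ((involTwist t).ker.map (powMonoidHom 2)).relIndex
        ((involTwist t).ker ⊓ (powMonoidHom 2 : A →* A).range) =
      Nat.card (powMonoidHom 2 : A →* A).ker := by
  have hcomm : (involTwist t).comp (powMonoidHom 2) = (powMonoidHom 2).comp (involTwist t) :=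
    MonoidHom.ext fun a => map_pow (involTwist t) a 2
  have hrange : (powMonoidHom 2 : A →* A).ker ≤ (involTwist t).range := by
    rw [← h90]
    intro a ha
    rw [MonoidHom.mem_ker, involNorm_eq_sq (htorsion ha)]
    exact ha
  rw [relIndex_map_ker_symm hcomm, inf_eq_left.2 hrange, (Subgroup.map_eq_bot_iff _).2 htorsion,
    Subgroup.relIndex_bot_left]

/-- Both `[C : A ^ 2 ∩ C]` and `[N A : C ^ 2]` are computed by Hilbert's theorem 90, where
`C` is the group of fixed points and `N` the norm. -/
lemma relIndex_range_involNorm_mul {t : A →* A} (ht : ∀ a, t (t a) = a)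
    (h90 : (involNorm t).ker = (involTwist t).range)
    (htorsion : (powMonoidHom 2 : A →* A).ker ≤ (involTwist t).ker) :
    (involNorm t).range.relIndex (involTwist t).ker * (powMonoidHom 2 : A →* A).range.index *
        Nat.card (powMonoidHom 2 : A →* A).ker =
      ((involTwist t).ker.map (powMonoidHom 2)).relIndex (involTwist t).ker ^ 2 := by
  set C := (involTwist t).ker
  set S := (powMonoidHom 2 : A →* A).range
  have hNC : C.map (involNorm t) = C.map (powMonoidHom 2) := by
    ext b
    exact exists_congr fun a => and_congr_right fun ha => by
      rw [involNorm_eq_sq ha, powMonoidHom_apply]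
  have hNA : (C.map (powMonoidHom 2)).relIndex (involNorm t).range = (C ⊔ S).index := by
    rw [← hNC, MonoidHom.range_eq_map, Subgroup.relIndex_map_map, h90, top_sup_eq,
      Subgroup.relIndex_top_right, ker_involTwist_sup_range_involTwist ht]
  have hCNA := Subgroup.relIndex_mul_relIndex (C.map (powMonoidHom 2)) _ C
    (hNC ▸ Subgroup.map_le_range _ _) (range_involNorm_le_ker_involTwist ht)
  have hCS := Subgroup.relIndex_mul_relIndex (C.map (powMonoidHom 2)) (C ⊓ S) C
    (le_inf (hNC ▸ (Subgroup.map_le_range _ _).trans (range_involNorm_le_ker_involTwist ht))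
      (Subgroup.map_le_range _ _)) inf_le_left
  have hS := Subgroup.relIndex_mul_index (le_sup_right : S ≤ C ⊔ S)
  rw [Subgroup.relIndex_sup_right] at hS
  rw [Subgroup.inf_relIndex_left, relIndex_map_sq_ker_involTwist h90 htorsion] at hCS
  rw [sq, ← hS]
  nth_rw 1 [← hCNA]
  rw [hNA, ← hCS]
  ring

end TwistedHomomorphisms

section FiniteIndex

variable {A : Type*} [CommGroup A]

lemma index_range_mul_index (f : A →* A) (B : Subgroup A) :
    f.range.index * (Nat.card (f.ker ⊓ B : Subgroup A) * B.index) =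
      Nat.card f.ker * (B.map f).index := by
  have hB := Subgroup.relIndex_mul_index (le_sup_left : B ≤ B ⊔ f.ker)
  have hker := Subgroup.relIndex_mul_relIndex ⊥ (f.ker ⊓ B) f.ker bot_le inf_le_left
  rw [sup_comm, Subgroup.relIndex_sup_right, sup_comm] at hB
  rw [Subgroup.relIndex_bot_left, Subgroup.relIndex_bot_left, Subgroup.inf_relIndex_left] at hker
  rw [Subgroup.index_map, ← hB, ← hker]
  ring

/-- A Herbrand quotient may be computed on any stable subgroup of finite index. -/
lemma index_range_mul_card_ker_inf (f : A →* A) (B : Subgroup A) [B.FiniteIndex]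
    (hB : B.map f ≤ B) :
    f.range.index * Nat.card (f.ker ⊓ B : Subgroup A) =
      Nat.card f.ker * (B.map f).relIndex B := by
  refine Nat.eq_of_mul_eq_mul_right (Nat.pos_of_ne_zero B.index_ne_zero_of_finite) ?_
  rw [mul_assoc, mul_assoc, Subgroup.relIndex_mul_index hB, index_range_mul_index]

end FiniteIndex

section UnitCongruence

variable {R : Type*} [CommRing R]

/-- The group of units congruent to `1` modulo `I`. -/
def unitsCongrOne (I : Ideal R) : Subgroup Rˣ := (Units.map (Ideal.Quotient.mk I : R →* R ⧸ I)).ker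

lemma mem_unitsCongrOne {I : Ideal R} {u : Rˣ} : u ∈ unitsCongrOne I ↔ (u : R) - 1 ∈ I := by
  rw [unitsCongrOne, MonoidHom.mem_ker, Units.ext_iff, ← Ideal.Quotient.mk_eq_mk_iff_sub_mem]
  rfl

instance (I : Ideal R) [Finite (R ⧸ I)] : (unitsCongrOne I).FiniteIndex :=
  Subgroup.finiteIndex_ker _

lemma div_mem_unitsCongrOne {I : Ideal R} {u v : Rˣ} :
    u / v ∈ unitsCongrOne I ↔ (u : R) - v ∈ I := by
  rw [mem_unitsCongrOne, ← I.mul_unit_mem_iff_mem v.isUnit, sub_mul, one_mul, ← Units.val_mul,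
    div_mul_cancel]

lemma exists_mem_unitsCongrOne {I : Ideal R} (hI : I ≤ Ideal.jacobson ⊥) {x : R} (hx : x ∈ I) :
    ∃ u ∈ unitsCongrOne I, (u : R) = 1 + x := by
  obtain ⟨u, hu⟩ := Ideal.mem_jacobson_bot.1 (hI hx) 1
  have hux : (u : R) = 1 + x := by rw [hu]; ring
  exact ⟨u, mem_unitsCongrOne.2 (by rwa [hux, add_sub_cancel_left]), hux⟩

/-- The cosets are represented by the units `1 + a * x` with `x` modulo `b`. -/
lemma relIndex_unitsCongrOne_mul [IsDomain R] {a : R} (b : R) (ha0 : a ≠ 0)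
    (ha : Ideal.span {a} ≤ Ideal.jacobson ⊥) :
    (unitsCongrOne (Ideal.span {a * b})).relIndex (unitsCongrOne (Ideal.span {a})) =
      Nat.card (R ⧸ Ideal.span {b}) := by
  choose u hu hux using fun x : R =>
    exists_mem_unitsCongrOne ha (Ideal.mul_mem_right x _ (Ideal.mem_span_singleton_self a))
  let coset : R → unitsCongrOne (Ideal.span {a}) ⧸
      (unitsCongrOne (Ideal.span {a * b})).subgroupOf (unitsCongrOne (Ideal.span {a})) :=
    fun x => QuotientGroup.mk ⟨u x, hu x⟩
  have coset_eq_iff : ∀ x y, coset x = coset y ↔ x - y ∈ Ideal.span {b} := by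
    intro x y
    rw [QuotientGroup.eq_iff_div_mem, Subgroup.mem_subgroupOf, Subgroup.coe_div,
      div_mem_unitsCongrOne, hux, hux, add_sub_add_left_eq_sub, ← mul_sub,
      Ideal.mem_span_singleton, Ideal.mem_span_singleton, mul_dvd_mul_iff_left ha0]
  have coset_surjective : Function.Surjective coset := by
    intro q
    obtain ⟨⟨v, hv⟩, rfl⟩ := QuotientGroup.mk_surjective q
    obtain ⟨x, hx⟩ := Ideal.mem_span_singleton.1 (mem_unitsCongrOne.1 hv)
    have : u x = v := Units.ext (by rw [hux, ← hx, add_sub_cancel])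
    exact ⟨x, by simp only [coset, this]⟩
  exact Nat.card_congr (((Quotient.congrRight fun x y => by
    rw [Setoid.ker_def, coset_eq_iff]
    exact Submodule.quotientRel_def _).trans
      (Setoid.quotientKerEquivOfSurjective coset coset_surjective)).symm)

end UnitCongruence

section HenselianSquares

open Polynomial

lemma card_ker_sq_units (R : Type*) [CommRing R] [IsDomain R] (h2 : (2 : R) ≠ 0) :
    Nat.card (powMonoidHom 2 : Rˣ →* Rˣ).ker = 2 := by
  have hneg : IsPrimitiveRoot (-1 : R) 2 :=
    IsPrimitiveRoot.iff_orderOf.2 (orderOf_eq_prime neg_one_sq fun h =>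
      h2 (by rw [← one_add_one_eq_two]; nth_rw 1 [← h]; exact neg_add_cancel 1))
  rw [← rootsOfUnity_eq_ker (M := R) (k := 2), hneg.card_rootsOfUnity]

variable {R : Type*} [CommRing R]

lemma exists_add_sq_eq (I : Ideal R) [HenselianRing R I] {t : R} (ht : t ∈ I) :
    ∃ v ∈ I, v + v ^ 2 = t := by
  obtain ⟨v, hv, hv0⟩ := HenselianRing.is_henselian (I := I) (X ^ 2 + X - C t)
    (by monicity!) 0 (by simpa using ht) (by simp)
  refine ⟨v, by simpa using hv0, ?_⟩
  simp only [IsRoot, eval_sub, eval_add, eval_pow, eval_X, eval_C] at hv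
  linear_combination hv

lemma exists_sq_eq_one_add_four_mul (I : Ideal R) [HenselianRing R I] {t : R} (ht : t ∈ I) :
    ∃ v ∈ I, (1 + 2 * v) ^ 2 = 1 + 4 * t := by
  obtain ⟨v, hv, hvt⟩ := exists_add_sq_eq I ht
  exact ⟨v, hv, by rw [← hvt]; ring⟩

lemma map_sq_unitsCongrOne (π : R) [HenselianRing R (Ideal.span {π})] :
    (unitsCongrOne (Ideal.span {2 * π})).map (powMonoidHom 2) =
      unitsCongrOne (Ideal.span {2 * π * 2}) := by
  have hjac : Ideal.span {2 * π} ≤ Ideal.jacobson ⊥ :=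
    (Ideal.span_singleton_le_span_singleton.2 (dvd_mul_left _ _)).trans HenselianRing.jac
  ext u
  rw [mem_unitsCongrOne, Ideal.mem_span_singleton]
  constructor
  · rintro ⟨v, hv, rfl⟩
    obtain ⟨x, hx⟩ := Ideal.mem_span_singleton.1 (mem_unitsCongrOne.1 hv)
    refine ⟨x + π * x ^ 2, ?_⟩
    rw [powMonoidHom_apply, Units.val_pow_eq_pow_val]
    linear_combination (v + 1 + 2 * π * x) * hx
  · rintro ⟨x, hx⟩
    obtain ⟨v, hv, hvu⟩ := exists_sq_eq_one_add_four_mul (Ideal.span {π}) (t := π * x)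
      (Ideal.mul_mem_right _ _ (Ideal.mem_span_singleton_self π))
    obtain ⟨w, hw, hwv⟩ := exists_mem_unitsCongrOne hjac (x := 2 * v)
      (Ideal.mem_span_singleton.2 (mul_dvd_mul_left 2 (Ideal.mem_span_singleton.1 hv)))
    refine ⟨w, hw, Units.ext ?_⟩
    rw [powMonoidHom_apply, Units.val_pow_eq_pow_val, hwv, hvu]
    linear_combination -hx

lemma ker_sq_inf_unitsCongrOne [IsDomain R] (h2 : (2 : R) ≠ 0) {π : R}
    (hπ : Ideal.span {π} ≤ Ideal.jacobson ⊥) :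
    (powMonoidHom 2 : Rˣ →* Rˣ).ker ⊓ unitsCongrOne (Ideal.span {2 * π}) = ⊥ := by
  rw [eq_bot_iff]
  rintro u ⟨hu, hu'⟩
  obtain ⟨x, hx⟩ := Ideal.mem_span_singleton.1 (mem_unitsCongrOne.1 hu')
  have huu : u * u = 1 := (sq u).symm.trans hu
  rcases (Units.inv_eq_self_iff u).1 (inv_eq_of_mul_eq_one_right huu) with rfl | rfl
  · exact one_mem _
  · obtain ⟨v, -, hv⟩ := exists_mem_unitsCongrOne hπ
      (Ideal.mul_mem_right x _ (Ideal.mem_span_singleton_self π))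
    refine absurd (mul_left_cancel₀ h2 ?_) v.ne_zero
    rw [hv]
    push_cast at hx
    linear_combination -hx

lemma index_range_sq_units [IsDomain R] (h2 : (2 : R) ≠ 0) {π : R} (hπ : π ≠ 0)
    [HenselianRing R (Ideal.span {π})] [Finite (R ⧸ Ideal.span {2 * π})] :
    (powMonoidHom 2 : Rˣ →* Rˣ).range.index = 2 * Nat.card (R ⧸ Ideal.span {(2 : R)}) := by
  have hπjac : Ideal.span {π} ≤ Ideal.jacobson ⊥ := HenselianRing.jac
  have hjac : Ideal.span {2 * π} ≤ Ideal.jacobson ⊥ :=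
    (Ideal.span_singleton_le_span_singleton.2 (dvd_mul_left _ _)).trans hπjac
  have hsub : unitsCongrOne (Ideal.span {2 * π * 2}) ≤ unitsCongrOne (Ideal.span {2 * π}) :=
    fun u hu => mem_unitsCongrOne.2 (Ideal.span_singleton_le_span_singleton.2
      (dvd_mul_right _ _) (mem_unitsCongrOne.1 hu))
  have h := index_range_mul_card_ker_inf (powMonoidHom 2) (unitsCongrOne (Ideal.span {2 * π}))
    ((map_sq_unitsCongrOne π).trans_le hsub)
  rwa [ker_sq_inf_unitsCongrOne h2 hπjac, Subgroup.card_bot, mul_one, card_ker_sq_units R h2,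
    map_sq_unitsCongrOne, relIndex_unitsCongrOne_mul 2 (mul_ne_zero h2 hπ) hjac] at h

end HenselianSquares

section FractionField

lemma index_range_sq_congr {A B : Type*} [CommGroup A] [CommGroup B] (e : A ≃* B) :
    (powMonoidHom 2 : A →* A).range.index = (powMonoidHom 2 : B →* B).range.index := by
  rw [← Subgroup.index_map_equiv _ e]
  congr 1
  ext b
  constructor
  · rintro ⟨_, ⟨a, rfl⟩, rfl⟩
    exact ⟨e a, (map_pow e a 2).symm⟩
  · rintro ⟨b, rfl⟩
    exact ⟨_, ⟨e.symm b, rfl⟩, by simp⟩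

lemma index_range_sq_prod (A B : Type*) [CommGroup A] [CommGroup B] :
    (powMonoidHom 2 : A × B →* A × B).range.index =
      (powMonoidHom 2 : A →* A).range.index * (powMonoidHom 2 : B →* B).range.index := by
  rw [← Subgroup.index_prod]
  congr 1
  ext ⟨a, b⟩
  simp [Subgroup.mem_prod, Prod.ext_iff]

lemma index_range_sq_multiplicative_int :
    (powMonoidHom 2 : Multiplicative ℤ →* Multiplicative ℤ).range.index = 2 := by
  refine Subgroup.index_eq_two_iff.2 ⟨Multiplicative.ofAdd 1, fun k => ?_⟩
  have mem_iff : ∀ l : Multiplicative ℤ,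
      l ∈ (powMonoidHom 2 : Multiplicative ℤ →* Multiplicative ℤ).range ↔ Even l.toAdd := fun l =>
    ⟨fun ⟨m, hm⟩ => ⟨m.toAdd, by rw [← hm, powMonoidHom_apply, toAdd_pow, two_nsmul]⟩,
      fun ⟨m, hm⟩ => ⟨Multiplicative.ofAdd m, by
        rw [powMonoidHom_apply, ← ofAdd_nsmul, two_nsmul, ← hm, ofAdd_toAdd]⟩⟩
  rw [mem_iff, mem_iff, toAdd_mul, toAdd_ofAdd, Int.even_add_one]
  exact (xor_not_left).2 Iff.rfl

section DiscreteValuationRing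

variable {R : Type*} [CommRing R] [IsDomain R] [IsDiscreteValuationRing R]
  (K : Type*) [Field K] [Algebra R K] [IsFractionRing R K]

lemma bijective_coprod_zpowersHom {ϖ : R} (hϖ : Irreducible ϖ) (P : Kˣ)
    (hP : (P : K) = algebraMap R K ϖ) :
    Function.Bijective ((Units.map (algebraMap R K : R →* K)).coprod (zpowersHom Kˣ P)) := by
  set ι := Units.map (algebraMap R K : R →* K)
  have pow_eq_unit : ∀ (n : ℕ) (u : Rˣ), P ^ n = ι u → n = 0 := by
    intro n u h
    by_contra hn
    refine hϖ.not_isUnit ((isUnit_pow_iff hn).1 ⟨u, ?_⟩)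
    refine IsFractionRing.injective R K ?_
    rw [map_pow, ← hP, ← Units.val_pow_eq_pow_val, h]
    rfl
  have zpow_eq_unit : ∀ (k : ℤ) (u : Rˣ), P ^ k = ι u → k = 0 := by
    intro k u h
    obtain ⟨n, rfl | rfl⟩ := k.eq_nat_or_neg
    · rw [pow_eq_unit n u (by rwa [zpow_natCast] at h), Nat.cast_zero]
    · rw [_root_.zpow_neg, zpow_natCast, inv_eq_iff_eq_inv, ← map_inv] at h
      rw [pow_eq_unit n _ h, Nat.cast_zero, neg_zero]
  constructor
  · rw [injective_iff_map_eq_one]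
    rintro ⟨u, k⟩ h
    rw [MonoidHom.coprod_apply, zpowersHom_apply] at h
    have hk : k = 1 := zpow_eq_unit k.toAdd u⁻¹ <| by
      rw [map_inv]; exact eq_inv_of_mul_eq_one_right h
    rw [hk, toAdd_one, zpow_zero, mul_one] at h
    rw [hk, (injective_iff_map_eq_one ι).1 (Units.map_injective (IsFractionRing.injective R K)) u h,
      Prod.mk_one_one]
  · intro x
    obtain ⟨k, u, hx⟩ :=
      IsDiscreteValuationRing.exists_units_eq_smul_zpow_of_irreducible hϖ x.ne_zero
    refine ⟨(u, Multiplicative.ofAdd k), Units.ext ?_⟩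
    rw [MonoidHom.coprod_apply, zpowersHom_apply, hx, ← hP, Units.smul_def, Algebra.smul_def]
    push_cast
    rfl

lemma index_range_sq_units_fractionRing :
    (powMonoidHom 2 : Kˣ →* Kˣ).range.index = 2 * (powMonoidHom 2 : Rˣ →* Rˣ).range.index := by
  obtain ⟨ϖ, hϖ⟩ := IsDiscreteValuationRing.exists_irreducible R
  have hϖ0 : algebraMap R K ϖ ≠ 0 := by
    rw [Ne, FaithfulSMul.algebraMap_eq_zero_iff]; exact hϖ.ne_zero
  rw [← index_range_sq_congr (MulEquiv.ofBijective _
      (bijective_coprod_zpowersHom K hϖ (Units.mk0 _ hϖ0) rfl)),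
    index_range_sq_prod, index_range_sq_multiplicative_int, mul_comm]

end DiscreteValuationRing

end FractionField

section AdicCompleteness

open TensorProduct

universe u

lemma natCard_quotient_map {R S : Type*} [CommRing R] [Nontrivial R] [CommRing S] [Algebra R S]
    [Module.Free R S] [Module.Finite R S] (I : Ideal R) :
    Nat.card (S ⧸ I.map (algebraMap R S)) = Nat.card (R ⧸ I) ^ Module.finrank R S := by
  have b := (Module.finBasis R S).baseChange (R ⧸ I)
  rw [Nat.card_congr (Algebra.TensorProduct.quotIdealMapEquivQuotTensor S I).toEquiv,
    Nat.card_congr b.equivFun.toEquiv, Nat.card_fun, Nat.card_fin]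

lemma isAdicComplete_of_finite {R : Type u} [CommRing R] [IsNoetherianRing R] (I : Ideal R)
    [IsAdicComplete I R] (M : Type u) [AddCommGroup M] [Module R M] [Module.Finite R M] :
    IsAdicComplete I M := by
  have h := AdicCompletion.ofTensorProduct_bijective_of_finite_of_isNoetherian I M
  let e : R ⊗[R] M ≃ₗ[R] AdicCompletion I R ⊗[R] M :=
    TensorProduct.congr (AdicCompletion.ofLinearEquiv I R) (LinearEquiv.refl R M)
  rw [← AdicCompletion.of_bijective_iff]
  convert h.comp (e.bijective.comp (TensorProduct.lid R M).symm.bijective) using 1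
  ext m n
  simp only [e, Function.comp_apply, TensorProduct.lid_symm_apply, TensorProduct.congr_tmul,
    AdicCompletion.ofTensorProduct_tmul]
  exact (one_smul _ _).symm

lemma henselianRing_map_algebraMap {R : Type u} [CommRing R] [IsNoetherianRing R] (I : Ideal R)
    [IsAdicComplete I R] (S : Type u) [CommRing S] [Algebra R S] [Module.Finite R S] :
    HenselianRing S (I.map (algebraMap R S)) :=
  have : IsAdicComplete (I.map (algebraMap R S)) S :=
    (IsAdicComplete.map_algebraMap_iff I S).2 (isAdicComplete_of_finite I S)
  IsAdicComplete.henselianRing S _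

end AdicCompleteness

section PadicIntegers

variable (p : ℕ) [Fact p.Prime]

lemma finite_quotient_padicInt {r : ℤ_[p]} (hr : r ≠ 0) : Finite (ℤ_[p] ⧸ Ideal.span {r}) :=
  IsLocalRing.isOpen_iff_finite_quotient.1
    (IsDedekindDomain.isOpen_of_ne_bot (mt Ideal.span_singleton_eq_bot.1 hr))

variable (L : Type) [Field L] [Algebra ℚ_[p] L] [FiniteDimensional ℚ_[p] L]
  [Algebra ℤ_[p] L] [IsScalarTower ℤ_[p] ℚ_[p] L]

lemma mem_integralClosure_iff_spectralNorm_le_one {x : L} :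
    x ∈ integralClosure ℤ_[p] L ↔ spectralNorm ℚ_[p] L x ≤ 1 := by
  have hx : IsIntegral ℚ_[p] x := Algebra.IsIntegral.isIntegral x
  rw [spectralNorm, spectralValue_le_one_iff (minpoly.monic hx), mem_integralClosure_iff]
  constructor
  · intro h n
    rw [minpoly.isIntegrallyClosed_eq_field_fractions' ℚ_[p] h, Polynomial.coeff_map]
    exact PadicInt.norm_le_one _
  · intro h
    have hlifts : minpoly ℚ_[p] x ∈ Polynomial.lifts (algebraMap ℤ_[p] ℚ_[p]) :=
      (Polynomial.lifts_iff_coeff_lifts _).2 fun n => ⟨⟨_, h n⟩, rfl⟩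
    obtain ⟨q, hq, -, hmonic⟩ :=
      Polynomial.lifts_and_natDegree_eq_and_monic hlifts (minpoly.monic hx)
    refine ⟨q, hmonic, ?_⟩
    have := minpoly.aeval ℚ_[p] x
    rwa [← hq, Polynomial.aeval_map_algebraMap] at this

instance : ValuationRing (integralClosure ℤ_[p] L) := by
  have := integralClosure.isFractionRing_of_finite_extension (A := ℤ_[p]) ℚ_[p] L
  rw [ValuationRing.iff_isInteger_or_isInteger _ L]
  intro x
  let := spectralNorm.normedField ℚ_[p] L
  rcases le_total ‖x‖ 1 with h | h
  · exact Or.inl ⟨⟨x, (mem_integralClosure_iff_spectralNorm_le_one p L).2 h⟩, rfl⟩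
  · exact Or.inr ⟨⟨x⁻¹, (mem_integralClosure_iff_spectralNorm_le_one p L).2
      ((norm_inv x).trans_le (inv_le_one_of_one_le₀ h))⟩, rfl⟩

instance : Module.IsTorsionFree ℤ_[p] L := by
  rw [Module.isTorsionFree_iff_algebraMap_injective, IsScalarTower.algebraMap_eq ℤ_[p] ℚ_[p] L]
  exact (algebraMap ℚ_[p] L).injective.comp (IsFractionRing.injective _ _)

instance : Module.Finite ℤ_[p] (integralClosure ℤ_[p] L) :=
  IsIntegralClosure.finite ℤ_[p] ℚ_[p] L _

lemma henselianRing_integralClosure :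
    HenselianRing (integralClosure ℤ_[p] L) (Ideal.span {(p : integralClosure ℤ_[p] L)}) := by
  have := henselianRing_map_algebraMap (IsLocalRing.maximalIdeal ℤ_[p]) (integralClosure ℤ_[p] L)
  rwa [PadicInt.maximalIdeal_eq_span_p, Ideal.map_span, Set.image_singleton, map_natCast] at this

instance : IsDiscreteValuationRing (integralClosure ℤ_[p] L) := by
  have := IsIntegralClosure.isNoetherianRing ℤ_[p] ℚ_[p] L (integralClosure ℤ_[p] L)
  have not_isField : ¬ IsField (integralClosure ℤ_[p] L) := fun h =>
    IsDiscreteValuationRing.not_isField ℤ_[p] ((Algebra.IsIntegral.isField_iff_isField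
      (FaithfulSMul.algebraMap_injective ℤ_[p] (integralClosure ℤ_[p] L))).2 h)
  exact ((IsDiscreteValuationRing.TFAE (integralClosure ℤ_[p] L) not_isField).out 0 1).2
    (inferInstance : ValuationRing (integralClosure ℤ_[p] L))

lemma natCard_integralClosure_quotient (r : ℕ) :
    Nat.card (integralClosure ℤ_[p] L ⧸ Ideal.span {(r : integralClosure ℤ_[p] L)}) =
      Nat.card (ℤ_[p] ⧸ Ideal.span {(r : ℤ_[p])}) ^ Module.finrank ℚ_[p] L := by
  have : Module.Free ℤ_[p] (integralClosure ℤ_[p] L) :=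
    IsIntegralClosure.module_free ℤ_[p] ℚ_[p] L _
  rw [← IsIntegralClosure.rank ℤ_[p] ℚ_[p] L (integralClosure ℤ_[p] L), ← natCard_quotient_map,
    Ideal.map_span, Set.image_singleton, map_natCast]

end PadicIntegers

section PadicFields

variable (p : ℕ) [Fact p.Prime]

/-- By Hensel's lemma `1 - 4 * p` is a square. -/
lemma isSumSq_neg_one_padic : IsSumSq (-1 : ℚ_[p]) := by
  obtain ⟨v, -, hv⟩ := exists_sq_eq_one_add_four_mul (IsLocalRing.maximalIdeal ℤ_[p])
    (t := -(p : ℤ_[p])) (neg_mem (by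
      rw [PadicInt.maximalIdeal_eq_span_p]; exact Ideal.mem_span_singleton_self _))
  set s := algebraMap ℤ_[p] ℚ_[p] (1 + 2 * v)
  have hn : ((4 * p - 1 : ℕ) : ℚ_[p]) ≠ 0 := by
    have := (Fact.out : p.Prime).pos
    exact Nat.cast_ne_zero.2 (by lia)
  have hs : s ^ 2 = -((4 * p - 1 : ℕ) : ℚ_[p]) := by
    rw [← map_pow, hv, Nat.cast_sub (by have := (Fact.out : p.Prime).pos; lia)]
    simp only [map_add, map_mul, map_neg, map_one, map_ofNat, map_natCast, Nat.cast_mul,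
      Nat.cast_ofNat, Nat.cast_one]
    ring
  have key : (-1 : ℚ_[p]) = (4 * p - 1 : ℕ) * (s⁻¹ * s⁻¹) := by
    rw [← mul_inv, ← sq, hs, inv_neg, mul_neg, mul_inv_cancel₀ hn]
  rw [key]
  exact (IsSumSq.natCast _).mul (IsSumSq.mul_self _)

variable (L : Type) [Field L] [Algebra ℚ_[p] L] [FiniteDimensional ℚ_[p] L]

lemma index_range_sq_units_padic :
    (powMonoidHom 2 : Lˣ →* Lˣ).range.index =
      4 * Nat.card (ℤ_[p] ⧸ Ideal.span {(2 : ℤ_[p])}) ^ Module.finrank ℚ_[p] L := by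
  let : Algebra ℤ_[p] L := ((algebraMap ℚ_[p] L).comp (algebraMap ℤ_[p] ℚ_[p])).toAlgebra
  have : IsScalarTower ℤ_[p] ℚ_[p] L := IsScalarTower.of_algebraMap_eq fun x => rfl
  let O := integralClosure ℤ_[p] L
  have : IsFractionRing O L := integralClosure.isFractionRing_of_finite_extension ℚ_[p] L
  have : CharZero O := charZero_of_injective_algebraMap (FaithfulSMul.algebraMap_injective ℤ_[p] O)
  have := henselianRing_integralClosure p L
  have hp : p ≠ 0 := (Fact.out : p.Prime).ne_zero
  have : Finite (O ⧸ Ideal.span {2 * (p : O)}) := by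
    have hfinite := finite_quotient_padicInt p (r := (2 * p : ℕ)) (Nat.cast_ne_zero.2 (by simpa))
    have hcard := natCard_integralClosure_quotient p L (2 * p)
    rw [Nat.cast_mul, Nat.cast_ofNat] at hcard
    exact (Nat.card_ne_zero.1 (hcard ▸ pow_ne_zero _ Nat.card_pos.ne')).2
  have hcard := natCard_integralClosure_quotient p L 2
  rw [Nat.cast_ofNat, Nat.cast_ofNat] at hcard
  rw [index_range_sq_units_fractionRing (R := O) L,
    index_range_sq_units two_ne_zero (Nat.cast_ne_zero.2 hp : (p : O) ≠ 0), hcard]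
  ring

end PadicFields

section NormIndex

variable {K : Type*} [Field K] {τ : K →+* K}

lemma ker_involNorm_units (hτ : ∀ x, τ (τ x) = x) (hne : ∃ x, τ x ≠ x) :
    (involNorm (Units.map (τ : K →* K))).ker = (involTwist (Units.map (τ : K →* K))).range := by
  refine le_antisymm (fun c hc => ?_)
    (range_involTwist_le_ker_involNorm fun a => Units.ext (hτ a))
  have hc' : (c : K) * τ c = 1 := congrArg Units.val (mem_ker_involNorm.1 hc)
  obtain ⟨b, hb, hbc⟩ : ∃ b : K, b ≠ 0 ∧ b = c * τ b := by
    by_cases h : 1 + (c : K) = 0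
    · obtain ⟨x, hx⟩ := hne
      refine ⟨x - τ x, sub_ne_zero.2 hx.symm, ?_⟩
      rw [map_sub, hτ]
      linear_combination (x - τ x) * h
    · refine ⟨1 + c, h, ?_⟩
      rw [map_add, map_one, mul_add, hc', mul_one, add_comm]
  refine ⟨Units.mk0 b hb, ?_⟩
  rw [involTwist_apply, div_eq_iff_eq_mul]
  exact Units.ext hbc

lemma mem_ker_involTwist_units {u : Kˣ} :
    u ∈ (involTwist (Units.map (τ : K →* K))).ker ↔ τ u = u := by
  rw [mem_ker_involTwist, Units.ext_iff]
  rfl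

lemma ker_sq_le_ker_involTwist_units :
    (powMonoidHom 2 : Kˣ →* Kˣ).ker ≤ (involTwist (Units.map (τ : K →* K))).ker := by
  intro u hu
  have hu' : (u : K) ^ 2 = 1 := congrArg Units.val (MonoidHom.mem_ker.1 hu)
  rw [mem_ker_involTwist_units]
  rcases sq_eq_one_iff.1 hu' with h | h <;> simp [h]

lemma mem_range_unitsMap_algebraMap {F : Type*} [Field F] [Algebra F K] {u : Kˣ} :
    u ∈ (Units.map (algebraMap F K : F →* K)).range ↔ (u : K) ∈ (algebraMap F K).range := by
  constructor
  · rintro ⟨a, rfl⟩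
    exact ⟨a, rfl⟩
  · rintro ⟨a, ha⟩
    have ha0 : a ≠ 0 := by
      rintro rfl
      exact u.ne_zero (by rw [← ha, map_zero])
    exact ⟨Units.mk0 a ha0, Units.ext ha⟩

lemma ker_involTwist_units {F : Type*} [Field F] [Algebra F K]
    (hfix : ∀ x, τ x = x ↔ x ∈ (algebraMap F K).range) :
    (involTwist (Units.map (τ : K →* K))).ker = (Units.map (algebraMap F K : F →* K)).range := by
  ext u
  rw [mem_ker_involTwist_units, hfix, mem_range_unitsMap_algebraMap]

lemma relIndex_range_involNorm_units {F : Type*} [Field F] [Algebra F K] (h2 : (2 : K) ≠ 0)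
    (hτ : ∀ x, τ (τ x) = x) (hne : ∃ x, τ x ≠ x)
    (hfix : ∀ x, τ x = x ↔ x ∈ (algebraMap F K).range)
    (hF : (powMonoidHom 2 : Fˣ →* Fˣ).range.index ≠ 0)
    (hFK : (powMonoidHom 2 : Kˣ →* Kˣ).range.index * 4 =
      (powMonoidHom 2 : Fˣ →* Fˣ).range.index ^ 2) :
    (involNorm (Units.map (τ : K →* K))).range.relIndex
      (involTwist (Units.map (τ : K →* K))).ker = 2 := by
  have key := relIndex_range_involNorm_mul (t := Units.map (τ : K →* K))
    (fun a => Units.ext (hτ a)) (ker_involNorm_units hτ hne) ker_sq_le_ker_involTwist_units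
  have hsq : ((involTwist (Units.map (τ : K →* K))).ker.map (powMonoidHom 2)).relIndex
      (involTwist (Units.map (τ : K →* K))).ker = (powMonoidHom 2 : Fˣ →* Fˣ).range.index := by
    set ι := Units.map (algebraMap F K : F →* K)
    have hι : (powMonoidHom 2).comp ι = ι.comp (powMonoidHom 2) :=
      MonoidHom.ext fun a => (map_pow ι a 2).symm
    rw [ker_involTwist_units hfix, MonoidHom.map_range, hι, ← MonoidHom.map_range,
      MonoidHom.range_eq_map ι, Subgroup.relIndex_map_map_of_injective (f := ι) _ _
        (Units.map_injective (algebraMap F K).injective), Subgroup.relIndex_top_right]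
  rw [hsq, card_ker_sq_units K h2, ← hFK] at key
  have hK : 0 < (powMonoidHom 2 : Kˣ →* Kˣ).range.index := by
    rw [pos_iff_ne_zero]
    rintro h
    rw [h, zero_mul] at hFK
    exact pow_ne_zero 2 hF hFK.symm
  exact Nat.eq_of_mul_eq_mul_right hK (by linarith)

end NormIndex

section PadicNormIndex

lemma relIndex_range_involNorm_units_padic (p : ℕ) [Fact p.Prime] {F K : Type} [Field F] [Field K]
    [Algebra ℚ_[p] F] [Algebra ℚ_[p] K] [Algebra F K] [IsScalarTower ℚ_[p] F K]
    [FiniteDimensional ℚ_[p] K] (hrank : Module.finrank F K = 2) {τ : K →+* K}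
    (hτ : ∀ x, τ (τ x) = x) (hfix : ∀ x, τ x = x ↔ x ∈ (algebraMap F K).range) :
    (involNorm (Units.map (τ : K →* K))).range.relIndex
      (involTwist (Units.map (τ : K →* K))).ker = 2 := by
  have : FiniteDimensional ℚ_[p] F := FiniteDimensional.left ℚ_[p] F K
  have : CharZero K := charZero_of_injective_algebraMap (algebraMap ℚ_[p] K).injective
  have hne : ∃ x, τ x ≠ x := by
    by_contra! h
    have hbij : Function.Bijective (Algebra.linearMap F K) :=
      ⟨(algebraMap F K).injective, fun x => (hfix x).1 (h x)⟩
    have h1 := (LinearEquiv.ofBijective _ hbij).finrank_eq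
    rw [Module.finrank_self, hrank] at h1
    lia
  have := finite_quotient_padicInt p (two_ne_zero (α := ℤ_[p]))
  apply relIndex_range_involNorm_units two_ne_zero hτ hne hfix
  · rw [index_range_sq_units_padic p F]
    exact mul_ne_zero four_ne_zero (pow_ne_zero _ Nat.card_pos.ne')
  · rw [index_range_sq_units_padic p K, index_range_sq_units_padic p F,
      ← Module.finrank_mul_finrank ℚ_[p] F K, hrank]
    ring

end PadicNormIndex

section QuadraticNorms

variable {F : Type*} [Field F]

/-- The subgroup of `Fˣ` consisting of the nonzero values of the binary form `x ^ 2 - d * y ^ 2`,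
that is the group of norms from `F(√d)`. -/
def quadNorm (d : F) : Subgroup Fˣ :=
  (Units.map (QuadraticAlgebra.norm : QuadraticAlgebra F d 0 →* F)).range

lemma mem_quadNorm {d : F} {u : Fˣ} : u ∈ quadNorm d ↔ ∃ a b : F, (u : F) = a ^ 2 - d * b ^ 2 := by
  have norm_mk (a b : F) :
      QuadraticAlgebra.norm (⟨a, b⟩ : QuadraticAlgebra F d 0) = a ^ 2 - d * b ^ 2 := by
    rw [QuadraticAlgebra.norm_def]; ring
  constructor
  · rintro ⟨z, rfl⟩
    exact ⟨z.val.re, z.val.im, norm_mk _ _⟩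
  · rintro ⟨a, b, h⟩
    rw [← norm_mk] at h
    obtain ⟨z, hz⟩ := QuadraticAlgebra.isUnit_iff_norm_isUnit.2 (h ▸ u.isUnit)
    exact ⟨z, Units.ext (by rw [h, ← hz]; rfl)⟩

lemma mem_quadNorm_comm (h2 : (2 : F) ≠ 0) {d e : Fˣ} :
    e ∈ quadNorm (d : F) ↔ d ∈ quadNorm (e : F) := by
  suffices H : ∀ d e : Fˣ, e ∈ quadNorm (d : F) → d ∈ quadNorm (e : F) from ⟨H _ _, H _ _⟩
  intro d e h
  obtain ⟨a, b, h⟩ := mem_quadNorm.1 h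
  refine mem_quadNorm.2 ?_
  rcases eq_or_ne b 0 with rfl | hb
  · have ha : a ≠ 0 := by
      rintro rfl
      exact e.ne_zero (by rw [h]; ring)
    refine ⟨(d + 1) / 2, (d - 1) / (2 * a), ?_⟩
    rw [h]
    field_simp
    ring
  · refine ⟨a / b, 1 / b, ?_⟩
    rw [h]
    field_simp
    ring

/-- If `N(√e) ≤ N(√d)` then the two groups coincide, so by the symmetry of the Hilbert symbol
`e * d` is a norm from every `F(√x)`, and then every `x` is a norm from `F(√(e * d))`. -/
lemma not_quadNorm_le_quadNorm (h2 : (2 : F) ≠ 0)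
    (hindex : ∀ d : F, ¬ IsSquare d → (quadNorm d).index = 2) {d e : Fˣ}
    (hd : ¬ IsSquare (d : F)) (he : ¬ IsSquare (e : F)) (hed : ¬ IsSquare (e * d : F)) :
    ¬ quadNorm (e : F) ≤ quadNorm (d : F) := by
  intro hle
  have heq : quadNorm (e : F) = quadNorm (d : F) := by
    have h := Subgroup.relIndex_mul_index hle
    rw [hindex d hd, hindex e he] at h
    exact hle.antisymm (Subgroup.relIndex_eq_one.1 (by lia))
  have htop : quadNorm ((e * d : Fˣ) : F) = ⊤ := by
    refine eq_top_iff.2 fun x _ => (mem_quadNorm_comm h2).1 ?_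
    have hmem : e ∈ quadNorm (x : F) ↔ d ∈ quadNorm (x : F) := by
      rw [mem_quadNorm_comm h2, heq, mem_quadNorm_comm h2]
    by_cases hx : IsSquare (x : F)
    · obtain ⟨r, hr⟩ := hx
      rw [mem_quadNorm_comm h2]
      exact mem_quadNorm.2 ⟨r, 0, by rw [hr]; ring⟩
    · exact (Subgroup.mul_mem_iff_of_index_two (hindex x hx)).2 hmem
  have h := hindex _ hed
  rw [← Units.val_mul, htop, Subgroup.index_top] at h
  lia

end QuadraticNorms

section PadicQuadraticNorms

open QuadraticAlgebra in
lemma index_quadNorm_padic (p : ℕ) [Fact p.Prime] {F : Type} [Field F] [Algebra ℚ_[p] F]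
    [FiniteDimensional ℚ_[p] F] {d : F} (hd : ¬ IsSquare d) : (quadNorm d).index = 2 := by
  have : Fact (∀ r : F, r ^ 2 ≠ d + 0 * r) := ⟨fun r h => hd ⟨r, by linear_combination -h⟩⟩
  have : FiniteDimensional ℚ_[p] (QuadraticAlgebra F d 0) := Module.Finite.trans F _
  have : CharZero F := charZero_of_injective_algebraMap (algebraMap ℚ_[p] F).injective
  set star' := starRingEnd (QuadraticAlgebra F d 0)
  have hfix (x : QuadraticAlgebra F d 0) :
      star' x = x ↔ x ∈ (algebraMap F (QuadraticAlgebra F d 0)).range := by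
    refine ⟨fun h => ⟨x.re, ?_⟩, ?_⟩
    · have him : -x.im = x.im := congrArg im h
      exact QuadraticAlgebra.ext rfl (self_eq_neg.1 him.symm).symm
    · rintro ⟨a, rfl⟩
      ext <;> simp [star', starRingEnd_apply]
  set ι := Units.map (algebraMap F (QuadraticAlgebra F d 0) : F →* QuadraticAlgebra F d 0)
  have hnorm : involNorm (Units.map (star' : QuadraticAlgebra F d 0 →* QuadraticAlgebra F d 0)) =
      ι.comp (Units.map QuadraticAlgebra.norm) :=
    MonoidHom.ext fun z => Units.ext (algebraMap_norm_eq_mul_star z.val).symm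
  have key := relIndex_range_involNorm_units_padic p (finrank_eq_two d 0) star_star hfix
  rw [hnorm, MonoidHom.range_comp, ker_involTwist_units hfix, MonoidHom.range_eq_map ι,
    Subgroup.relIndex_map_map_of_injective (f := ι) _ _
      (Units.map_injective (algebraMap F _).injective), Subgroup.relIndex_top_right] at key
  exact key

end PadicQuadraticNorms

section BiquadraticFields

variable {F K : Type*} [Field F] [Field K] [Algebra F K] {σ τ : K →+* K}

lemma exists_fixed_of_map_eq_neg (h2 : (2 : K) ≠ 0) (hσ : ∀ x, σ (σ x) = x) (hτ : ∀ x, τ (τ x) = x)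
    (hστ : ∀ x, σ (τ x) = τ (σ x)) (hτ1 : ∃ x, τ x ≠ x) (hne : ∃ x, σ x ≠ τ x) :
    ∃ δ, δ ≠ 0 ∧ σ δ = δ ∧ τ δ = -δ := by
  by_cases h : ∃ y, σ y = y ∧ τ y ≠ y
  · obtain ⟨y, hσy, hτy⟩ := h
    exact ⟨y - τ y, sub_ne_zero.2 hτy.symm, by rw [map_sub, hστ, hσy], by rw [map_sub, hτ]; ring⟩
  push Not at h
  exfalso
  obtain ⟨x, hx⟩ := hτ1
  obtain ⟨y, hy⟩ := hne
  set w := x - σ x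
  have hw : w ≠ 0 := sub_ne_zero.2 fun hx' => hx (h x hx'.symm)
  have hσw : σ w = -w := by rw [map_sub, hσ, neg_sub]
  have trace_fixed (z : K) : τ (z + σ z) = z + σ z := h _ (by rw [map_add, hσ, add_comm])
  have hτw : τ w = w ∨ τ w = -w := by
    rw [← sq_eq_sq_iff_eq_or_eq_neg, ← map_pow]
    exact h _ (by rw [map_pow, hσw, neg_sq])
  rcases hτw with hτw | hτw
  · refine hx (mul_left_cancel₀ h2 ?_)
    have hxw : 2 * x = (x + σ x) + w := by ring
    rw [← map_ofNat τ 2, ← map_mul, map_ofNat, hxw, map_add, trace_fixed, hτw]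
  · have hquot : τ ((y - σ y) / w) = (y - σ y) / w :=
      h _ (by rw [map_div₀, map_sub, hσ, hσw, div_neg, ← neg_div, neg_sub])
    have hanti : τ (y - σ y) = -(y - σ y) := by
      conv_lhs => rw [← div_mul_cancel₀ (y - σ y) hw]
      rw [map_mul, hquot, hτw, mul_neg, div_mul_cancel₀ _ hw]
    refine hy (mul_left_cancel₀ h2 ?_)
    have htrace := trace_fixed y
    rw [map_add] at htrace
    rw [map_sub] at hanti
    linear_combination -htrace - hanti

lemma not_isSquare_of_map_eq_neg (h2 : (2 : K) ≠ 0) {ρ : K →+* K}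
    (hρ : ∀ a : F, ρ (algebraMap F K a) = algebraMap F K a) {δ : K} (hδ : δ ≠ 0)
    (hρδ : ρ δ = -δ) {d : F} (hd : algebraMap F K d = δ ^ 2) : ¬ IsSquare d := by
  rintro ⟨r, rfl⟩
  rw [map_mul, ← sq, sq_eq_sq_iff_eq_or_eq_neg] at hd
  have hδr : ρ δ = δ := by
    rcases hd with h | h
    · rw [← h, hρ]
    · rw [← neg_eq_iff_eq_neg.2 h, map_neg, hρ]
  rw [hδr, eq_neg_iff_add_eq_zero, ← two_mul] at hρδ
  exact (mul_ne_zero h2 hδ) hρδ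

lemma map_involNorm_ker_involTwist (h2 : (2 : K) ≠ 0) (hτ : ∀ x, τ (τ x) = x)
    (hστ : ∀ x, σ (τ x) = τ (σ x))
    (hfix : ∀ x, x ∈ (algebraMap F K).range ↔ σ x = x ∧ τ x = x)
    {δ : K} (hδ : δ ≠ 0) (hσδ : σ δ = δ) (hτδ : τ δ = -δ) {d : F}
    (hd : algebraMap F K d = δ ^ 2) :
    (involTwist (Units.map (σ : K →* K))).ker.map (involNorm (Units.map (τ : K →* K))) =
      (quadNorm d).map (Units.map (algebraMap F K : F →* K)) := by
  have fixed (a : F) := (hfix _).1 ⟨a, rfl⟩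
  have norm_eq (a b : F) : (algebraMap F K a + algebraMap F K b * δ) *
      τ (algebraMap F K a + algebraMap F K b * δ) = algebraMap F K (a ^ 2 - d * b ^ 2) := by
    simp only [map_add, map_mul, map_sub, map_pow, fixed, hτδ, hd]
    ring
  ext u
  constructor
  · rintro ⟨w, hw, rfl⟩
    rw [SetLike.mem_coe, mem_ker_involTwist_units] at hw
    obtain ⟨a, ha⟩ := (hfix ((w + τ w) / 2)).2
      ⟨by simp [hστ, hw, map_ofNat], by simp [hτ, map_ofNat, add_comm]⟩
    obtain ⟨b, hb⟩ := (hfix ((w - τ w) / (2 * δ))).2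
      ⟨by simp [hστ, hw, hσδ, map_ofNat], by
        simp only [map_div₀, map_sub, map_mul, map_ofNat, hτ, hτδ]
        field_simp
        ring⟩
    have hwab : (w : K) = algebraMap F K a + algebraMap F K b * δ := by
      rw [ha, hb]; field_simp; ring
    have hN : (involNorm (Units.map (τ : K →* K)) w : K) = algebraMap F K (a ^ 2 - d * b ^ 2) := by
      rw [← norm_eq, ← hwab]; rfl
    have h0 : a ^ 2 - d * b ^ 2 ≠ 0 := by
      intro h
      rw [h, map_zero] at hN
      exact Units.ne_zero _ hN
    exact ⟨Units.mk0 _ h0, mem_quadNorm.2 ⟨a, b, rfl⟩, Units.ext hN.symm⟩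
  · rintro ⟨v, hv, rfl⟩
    obtain ⟨a, b, hab⟩ := mem_quadNorm.1 hv
    have hne : algebraMap F K a + algebraMap F K b * δ ≠ 0 := by
      intro h
      have := norm_eq a b
      rw [h, zero_mul, ← hab, eq_comm, map_eq_zero] at this
      exact v.ne_zero this
    refine ⟨Units.mk0 _ hne, ?_, Units.ext ((norm_eq a b).trans (by rw [← hab]; rfl))⟩
    rw [SetLike.mem_coe, mem_ker_involTwist_units, Units.val_mk0, map_add, map_mul, (fixed a).1,
      (fixed b).1, hσδ]

lemma ker_involTwist_inf_ker_involTwist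
    (hfix : ∀ x, x ∈ (algebraMap F K).range ↔ σ x = x ∧ τ x = x) :
    (involTwist (Units.map (σ : K →* K))).ker ⊓ (involTwist (Units.map (τ : K →* K))).ker =
      (Units.map (algebraMap F K : F →* K)).range := by
  ext u
  rw [Subgroup.mem_inf, mem_ker_involTwist_units, mem_ker_involTwist_units, ← hfix,
    mem_range_unitsMap_algebraMap]

/-- By `map_involNorm_ker_involTwist` the hypotheses of `relIndex_map_involTwist_ker_involNorm`
become statements on the norm groups of the quadratic extensions `F(δ)` and `F(η)` of `F`. -/
lemma relIndex_map_involTwist_ker_involNorm_units (h2 : (2 : K) ≠ 0) (hσ : ∀ x, σ (σ x) = x)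
    (hτ : ∀ x, τ (τ x) = x) (hστ : ∀ x, σ (τ x) = τ (σ x)) (hσ1 : ∃ x, σ x ≠ x)
    (hτ1 : ∃ x, τ x ≠ x) (hne : ∃ x, σ x ≠ τ x)
    (hfix : ∀ x, x ∈ (algebraMap F K).range ↔ σ x = x ∧ τ x = x)
    (hF : ∀ d : F, ¬ IsSquare d → (quadNorm d).index = 2)
    (hK : (involNorm (Units.map (τ : K →* K))).range.relIndex
      (involTwist (Units.map (τ : K →* K))).ker = 2) :
    ((involNorm (Units.map (τ : K →* K))).ker.map (involTwist (Units.map (σ : K →* K)))).relIndex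
        ((involNorm (Units.map (τ : K →* K))).ker ⊓
          (involNorm (Units.map (σ : K →* K))).ker) = 2 := by
  have hfix' : ∀ x, x ∈ (algebraMap F K).range ↔ τ x = x ∧ σ x = x := fun x =>
    (hfix x).trans and_comm
  obtain ⟨δ, hδ, hσδ, hτδ⟩ := exists_fixed_of_map_eq_neg h2 hσ hτ hστ hτ1 hne
  obtain ⟨η, hη, hτη, hση⟩ := exists_fixed_of_map_eq_neg h2 hτ hσ (fun x => (hστ x).symm) hσ1
    (hne.imp fun _ => Ne.symm)
  obtain ⟨d, hd⟩ := (hfix (δ ^ 2)).2 ⟨by rw [map_pow, hσδ], by rw [map_pow, hτδ, neg_sq]⟩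
  obtain ⟨e, he⟩ := (hfix (η ^ 2)).2 ⟨by rw [map_pow, hση, neg_sq], by rw [map_pow, hτη]⟩
  have hd0 : d ≠ 0 := by
    rintro rfl
    exact pow_ne_zero 2 hδ (by rw [← hd, map_zero])
  have he0 : e ≠ 0 := by
    rintro rfl
    exact pow_ne_zero 2 hη (by rw [← he, map_zero])
  have fixσ (a : F) := ((hfix _).1 ⟨a, rfl⟩).1
  have fixτ (a : F) := ((hfix _).1 ⟨a, rfl⟩).2
  have hdsq : ¬ IsSquare d := not_isSquare_of_map_eq_neg h2 fixτ hδ hτδ hd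
  have hesq : ¬ IsSquare e := not_isSquare_of_map_eq_neg h2 fixσ hη hση he
  have hedsq : ¬ IsSquare (e * d) := not_isSquare_of_map_eq_neg h2 fixσ (mul_ne_zero hη hδ)
    (by rw [map_mul, hση, hσδ, neg_mul]) (by rw [map_mul, he, hd, mul_pow])
  have h2F : (2 : F) ≠ 0 := fun h => h2 (by rw [← map_ofNat (algebraMap F K), h, map_zero])
  have hι := Units.map_injective (f := (algebraMap F K : F →* K)) (algebraMap F K).injective
  rw [relIndex_map_involTwist_ker_involNorm (fun a => Units.ext (hσ a)) (fun a => Units.ext (hτ a))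
    (fun a => Units.ext (hστ a)) (ker_involNorm_units hσ hσ1) hK,
    map_involNorm_ker_involTwist h2 hτ hστ hfix hδ hσδ hτδ hd,
    ker_involTwist_inf_ker_involTwist hfix, MonoidHom.range_eq_map,
    Subgroup.relIndex_map_map_of_injective _ _ hι, Subgroup.relIndex_top_right, hF d hdsq]
  rw [map_involNorm_ker_involTwist h2 hτ hστ hfix hδ hσδ hτδ hd,
    map_involNorm_ker_involTwist h2 hσ (fun x => (hστ x).symm) hfix' hη hτη hση he,
    Subgroup.map_le_map_iff_of_injective hι]
  exact not_quadNorm_le_quadNorm h2F hF (d := Units.mk0 d hd0) (e := Units.mk0 e he0) hdsq hesq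
    hedsq

end BiquadraticFields

section BinaryHermitianForms

variable {k : Type*} [Field k] [StarRing k]

variable (k) in
/-- Every nondegenerate diagonal binary hermitian form over `k` represents `1`. -/
def BinaryUniversal : Prop :=
  ∀ a b : k, IsSelfAdjoint a → a ≠ 0 → IsSelfAdjoint b → b ≠ 0 →
    ∃ x y : k, a * (x * star x) + b * (y * star y) = 1

lemma exists_mul_mul_star_eq_one {a : k} (ha : a ≠ 0) (h : ∃ w, w * star w = a) :
    ∃ x, a * (x * star x) = 1 := by
  obtain ⟨w, rfl⟩ := h
  refine ⟨w⁻¹, ?_⟩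
  rw [star_inv₀, ← mul_inv, mul_inv_cancel₀ ha]

lemma exists_mul_star_eq_of_isSelfAdjoint (h2 : (2 : k) ≠ 0)
    (hadd : ∀ x y : k, ∃ w, w * star w = x * star x + y * star y)
    (hneg : (-1 : k) ∈ AddSubmonoid.closure (Set.range fun x => x * star x)) {a : k}
    (ha : IsSelfAdjoint a) : ∃ w, w * star w = a := by
  have hclosure : ∀ s ∈ AddSubmonoid.closure (Set.range fun x : k => x * star x),
      ∃ w, w * star w = s := by
    intro _ hs
    induction hs using AddSubmonoid.closure_induction with
    | mem _ hs => exact hs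
    | zero => exact ⟨0, zero_mul _⟩
    | add s t _ _ hs ht =>
      obtain ⟨x, rfl⟩ := hs
      obtain ⟨y, rfl⟩ := ht
      exact hadd x y
  obtain ⟨v, hv⟩ := hclosure _ hneg
  obtain ⟨w, hw⟩ := hadd ((a + 1) / 2) (v * ((a - 1) / 2))
  refine ⟨w, ?_⟩
  simp only [hw, star_mul, star_div₀, star_add, star_sub, star_one, star_ofNat, ha.star_eq]
  field_simp
  linear_combination (a - 1) ^ 2 * hv

lemma binaryUniversal_of_neg_one_mem_closure (h2 : (2 : k) ≠ 0)
    (hmul : ∀ a b : k, IsSelfAdjoint a → IsSelfAdjoint b → (¬ ∃ w, w * star w = a) →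
      (¬ ∃ w, w * star w = b) → ∃ w, w * star w = a * b)
    (hneg : (-1 : k) ∈ AddSubmonoid.closure (Set.range fun x => x * star x)) :
    BinaryUniversal k := by
  intro a b ha ha0 hb hb0
  by_cases hNa : ∃ w, w * star w = a
  · obtain ⟨x, hx⟩ := exists_mul_mul_star_eq_one ha0 hNa
    exact ⟨x, 0, by rw [hx, zero_mul, mul_zero, add_zero]⟩
  by_cases hNb : ∃ w, w * star w = b
  · obtain ⟨y, hy⟩ := exists_mul_mul_star_eq_one hb0 hNb
    exact ⟨0, y, by rw [hy, zero_mul, mul_zero, zero_add]⟩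
  obtain ⟨x, y, hxy⟩ : ∃ x y : k, ¬ ∃ w, w * star w = x * star x + y * star y := by
    by_contra! hadd
    exact hNa (exists_mul_star_eq_of_isSelfAdjoint h2 hadd hneg ha)
  obtain ⟨u, hu⟩ := hmul a b ha hb hNa hNb
  obtain ⟨w, hw⟩ := hmul a _ ha ((IsSelfAdjoint.mul_star_self x).add (.mul_star_self y)) hNa hxy
  have hc : x * star x + y * star y ≠ 0 := fun h => hxy ⟨0, by rw [h, zero_mul]⟩
  obtain ⟨hu0, hu0'⟩ := mul_ne_zero_iff.1 (hu ▸ mul_ne_zero ha0 hb0)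
  obtain ⟨hw0, hw0'⟩ := mul_ne_zero_iff.1 (hw ▸ mul_ne_zero ha0 hc)
  refine ⟨x / w, a * y / (w * u), ?_⟩
  simp only [star_div₀, star_mul, ha.star_eq]
  field_simp
  linear_combination (a * y * star y) * (-hu) + u * star u * -hw

lemma map_mem_closure_range_mul_star {R : Type*} [Semiring R] {f : R →+* k}
    (hf : ∀ r, IsSelfAdjoint (f r)) {s : R} (hs : IsSumSq s) :
    f s ∈ AddSubmonoid.closure (Set.range fun x => x * star x) := by
  induction hs with
  | zero => rw [map_zero]; exact zero_mem _
  | sq_add a _ ih =>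
    rw [map_add]
    refine add_mem (AddSubmonoid.subset_closure ⟨f a, ?_⟩) ih
    simp only [map_mul, (hf a).star_eq]

end BinaryHermitianForms

section GaloisInvolutions

variable {L K : Type*} [Field L] [Field K] [Algebra L K]

lemma mem_fixedField_zpowers {σ : K ≃ₐ[L] K} {x : K} :
    x ∈ IntermediateField.fixedField (Subgroup.zpowers σ) ↔ σ x = x := by
  rw [IntermediateField.mem_fixedField_iff]
  refine ⟨fun h => h σ (Subgroup.mem_zpowers σ), fun h f hf => ?_⟩
  exact (Subgroup.zpowers_le (H := MulAction.stabilizer (K ≃ₐ[L] K) x)).2 h hf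

lemma map_eq_self_iff_mem_range_algebraMap {σ : K ≃ₐ[L] K} {x : K} :
    σ x = x ↔ x ∈ (algebraMap (IntermediateField.fixedField (Subgroup.zpowers σ)) K).range := by
  rw [← mem_fixedField_zpowers]
  exact ⟨fun h => ⟨⟨x, h⟩, rfl⟩, fun ⟨y, hy⟩ => hy ▸ y.2⟩

end GaloisInvolutions

section PadicInvolutions

variable (p : ℕ) [Fact p.Prime] {K : Type} [Field K] [Algebra ℚ_[p] K] [FiniteDimensional ℚ_[p] K]

lemma relIndex_range_involNorm_algEquiv {τ : K ≃ₐ[ℚ_[p]] K} (hτ2 : τ * τ = 1) (hτ1 : τ ≠ 1) :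
    (involNorm (Units.map ((τ : K →+* K) : K →* K))).range.relIndex
      (involTwist (Units.map ((τ : K →+* K) : K →* K))).ker = 2 := by
  refine relIndex_range_involNorm_units_padic p
    (F := IntermediateField.fixedField (Subgroup.zpowers τ)) ?_ (AlgEquiv.congr_fun hτ2)
    fun _ => map_eq_self_iff_mem_range_algebraMap
  rw [IntermediateField.finrank_fixedField_eq_card, Nat.card_zpowers,
    orderOf_eq_prime ((sq τ).trans hτ2) hτ1]

lemma binaryUniversal_padic [StarRing K]
    (hstar : ∀ r : ℚ_[p], IsSelfAdjoint (algebraMap ℚ_[p] K r)) (hne : ∃ x : K, star x ≠ x) :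
    BinaryUniversal K := by
  have : CharZero K := charZero_of_injective_algebraMap (algebraMap ℚ_[p] K).injective
  let τ : K ≃ₐ[ℚ_[p]] K := AlgEquiv.ofRingEquiv (f := starRingAut) hstar
  have hindex := relIndex_range_involNorm_algEquiv p (τ := τ) (AlgEquiv.ext star_star)
    fun h => hne.elim fun x hx => hx (AlgEquiv.congr_fun h x)
  have hneg := map_mem_closure_range_mul_star hstar (isSumSq_neg_one_padic p)
  rw [map_neg, map_one] at hneg
  refine binaryUniversal_of_neg_one_mem_closure two_ne_zero (fun a b ha hb hNa hNb => ?_) hneg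
  have not_norm {c : K} (hc : ¬ ∃ w, w * star w = c) (u : Kˣ) (hu : (u : K) = c) :
      u ∉ (involNorm (Units.map ((τ : K →+* K) : K →* K))).range := by
    rintro ⟨w, rfl⟩
    exact hc ⟨w, hu⟩
  have ha0 : a ≠ 0 := fun h => hNa ⟨0, by rw [h, zero_mul]⟩
  have hb0 : b ≠ 0 := fun h => hNb ⟨0, by rw [h, zero_mul]⟩
  have h := Subgroup.mul_mem_iff_of_index_two hindex
    (a := ⟨Units.mk0 a ha0, mem_ker_involTwist_units.2 ha⟩)
    (b := ⟨Units.mk0 b hb0, mem_ker_involTwist_units.2 hb⟩)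
  simp only [Subgroup.mem_subgroupOf, Subgroup.coe_mul] at h
  obtain ⟨w, hw⟩ := h.2 (iff_of_false (not_norm hNa _ rfl) (not_norm hNb _ rfl))
  exact ⟨w, congrArg Units.val hw⟩

variable {σ τ : K ≃ₐ[ℚ_[p]] K}

lemma relIndex_map_involTwist_ker_involNorm_algEquiv (hσ2 : σ * σ = 1) (hτ2 : τ * τ = 1)
    (hcomm : σ * τ = τ * σ) (hσ1 : σ ≠ 1) (hτ1 : τ ≠ 1) (hστ : σ ≠ τ) :
    ((involNorm (Units.map ((τ : K →+* K) : K →* K))).ker.map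
        (involTwist (Units.map ((σ : K →+* K) : K →* K)))).relIndex
      ((involNorm (Units.map ((τ : K →+* K) : K →* K))).ker ⊓
        (involNorm (Units.map ((σ : K →+* K) : K →* K))).ker) = 2 := by
  have : CharZero K := charZero_of_injective_algebraMap (algebraMap ℚ_[p] K).injective
  let F := IntermediateField.fixedField (Subgroup.zpowers σ) ⊓
    IntermediateField.fixedField (Subgroup.zpowers τ)
  have hfix (x : K) : x ∈ (algebraMap F K).range ↔ σ x = x ∧ τ x = x := by
    rw [← mem_fixedField_zpowers, ← mem_fixedField_zpowers, ← IntermediateField.mem_inf]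
    exact ⟨fun ⟨y, hy⟩ => hy ▸ y.2, fun h => ⟨⟨x, h⟩, rfl⟩⟩
  have hne : ∃ x, σ x ≠ τ x := DFunLike.ne_iff.1 hστ
  exact relIndex_map_involTwist_ker_involNorm_units two_ne_zero (AlgEquiv.congr_fun hσ2)
    (AlgEquiv.congr_fun hτ2) (AlgEquiv.congr_fun hcomm) (DFunLike.ne_iff.1 hσ1)
    (DFunLike.ne_iff.1 hτ1) hne hfix (fun d hd => index_quadNorm_padic p hd)
    (relIndex_range_involNorm_algEquiv p hτ2 hτ1)

end PadicInvolutions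

section GamIndex

variable {K : Type} [Field K] {σ τ : K →+* K}

lemma mem_Gam_iff {u : Kˣ} : (u : K) ∈ Gam σ τ ↔
    u ∈ (involNorm (Units.map (τ : K →* K))).ker.map (involTwist (Units.map (σ : K →* K))) := by
  constructor
  · rintro ⟨a, ha, hu⟩
    refine ⟨Units.mk0 a (left_ne_zero_of_mul_eq_one ha), Units.ext ha, Units.ext ?_⟩
    rw [hu, involTwist_apply, div_eq_mul_inv]
    simp
  · rintro ⟨a, ha, rfl⟩
    refine ⟨a, congrArg Units.val ha, ?_⟩
    rw [involTwist_apply, div_eq_mul_inv]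
    simp

lemma mem_oneInter_iff {u : Kˣ} : (u : K) ∈ oneInter σ τ ↔
    u ∈ (involNorm (Units.map (τ : K →* K))).ker ⊓ (involNorm (Units.map (σ : K →* K))).ker := by
  simp only [Subgroup.mem_inf, mem_ker_involNorm, Units.ext_iff]
  rfl

lemma Gam_subset_oneInter (hσ : ∀ x, σ (σ x) = x) (hστ : ∀ x, σ (τ x) = τ (σ x)) :
    Gam σ τ ⊆ oneInter σ τ := by
  rintro _ ⟨a, ha, rfl⟩
  have ha0 : a ≠ 0 := left_ne_zero_of_mul_eq_one ha
  refine ⟨?_, ?_⟩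
  · rw [map_mul, map_inv₀, mul_mul_mul_comm, ha, one_mul, ← mul_inv, ← hστ, ← map_mul, ha,
      map_one, inv_one]
  · have hσa : σ a ≠ 0 := by simpa using ha0
    rw [map_mul, map_inv₀, hσ]
    field_simp

lemma exists_mem_oneInter_notMem_Gam
    (h : ((involNorm (Units.map (τ : K →* K))).ker.map
      (involTwist (Units.map (σ : K →* K)))).relIndex
        ((involNorm (Units.map (τ : K →* K))).ker ⊓ (involNorm (Units.map (σ : K →* K))).ker) ≠ 1) :
    ∃ b ∈ oneInter σ τ, b ∉ Gam σ τ := by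
  obtain ⟨u, hu, hu'⟩ := SetLike.not_le_iff_exists.1 (mt Subgroup.relIndex_eq_one.2 h)
  exact ⟨u, mem_oneInter_iff.2 hu, mt mem_Gam_iff.1 hu'⟩

lemma mul_inv_mem_Gam_of_notMem
    (h : ((involNorm (Units.map (τ : K →* K))).ker.map
      (involTwist (Units.map (σ : K →* K)))).relIndex
        ((involNorm (Units.map (τ : K →* K))).ker ⊓ (involNorm (Units.map (σ : K →* K))).ker) = 2)
    {b c : K} (hb : b ∈ oneInter σ τ) (hc : c ∈ oneInter σ τ) (hbΓ : b ∉ Gam σ τ)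
    (hcΓ : c ∉ Gam σ τ) : c * b⁻¹ ∈ Gam σ τ := by
  lift b to Kˣ using (left_ne_zero_of_mul_eq_one hb.1).isUnit
  lift c to Kˣ using (left_ne_zero_of_mul_eq_one hc.1).isUnit
  rw [← Units.val_inv_eq_inv_val, ← Units.val_mul, mem_Gam_iff]
  rw [mem_oneInter_iff] at hb hc
  rw [mem_Gam_iff] at hbΓ hcΓ
  have := Subgroup.mul_mem_iff_of_index_two h (a := ⟨c, hc⟩) (b := ⟨b⁻¹, inv_mem hb⟩)
  simp only [Subgroup.mem_subgroupOf, Subgroup.coe_mul, inv_mem_iff] at this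
  exact this.2 (iff_of_false hcΓ hbΓ)

lemma exists_eq_mul_of_div_mem_Gam {z : K} (hz : z ≠ 0) (h : z / σ z ∈ Gam σ τ) :
    ∃ w, w ≠ 0 ∧ σ w = w ∧ z * τ z = w * τ w := by
  obtain ⟨a, ha, hza⟩ := h
  have ha0 : a ≠ 0 := left_ne_zero_of_mul_eq_one ha
  have hσa : σ a ≠ 0 := by simpa using ha0
  have hσz : σ z ≠ 0 := by simpa using hz
  refine ⟨z / a, div_ne_zero hz ha0, ?_, ?_⟩
  · rw [map_div₀, div_eq_div_iff hσa ha0]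
    field_simp at hza
    linear_combination -hza
  · rw [map_div₀, div_mul_div_comm, ha, div_one]

end GamIndex

section HermitianForms

variable {k ι κ : Type*} [Field k] [Fintype ι]

lemma isSelfAdjoint_star_dotProduct_mulVec [StarRing k] {A : Matrix ι ι k} (hA : A.IsHermitian)
    (v : ι → k) :
    IsSelfAdjoint (star v ⬝ᵥ A *ᵥ v) := by
  rw [IsSelfAdjoint, ← star_dotProduct_star, star_star, star_mulVec, hA.eq, dotProduct_mulVec]

lemma exists_star_dotProduct_mulVec_ne_zero [StarRing k] [NeZero (2 : k)] {A : Matrix ι ι k}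
    (hA : A.IsHermitian) (hA0 : A ≠ 0) : ∃ v, star v ⬝ᵥ A *ᵥ v ≠ 0 := by
  classical
  by_cases hdiag : ∃ i, A i i ≠ 0
  · obtain ⟨i, hi⟩ := hdiag
    exact ⟨Pi.single i 1, by simpa [← Pi.single_star] using hi⟩
  push Not at hdiag
  obtain ⟨i, l, hil⟩ : ∃ i l, A i l ≠ 0 := by
    by_contra! h
    exact hA0 (Matrix.ext h)
  have hli : A l i = star (A i l) := (hA.apply l i).symm
  refine ⟨Pi.single i 1 + Pi.single l (A i l)⁻¹, ?_⟩
  rw [star_add, ← Pi.single_star, ← Pi.single_star, mulVec_add, dotProduct_add, add_dotProduct,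
    add_dotProduct]
  simp [hdiag, hli, hil, one_add_one_eq_two, NeZero.ne]

variable [DecidableEq ι] [Fintype κ] [DecidableEq κ]

lemma exists_units_col_eq {v : ι → k} (hv : v ≠ 0) (i : ι) :
    ∃ P : (Matrix ι ι k)ˣ, P.val.col i = v := by
  obtain ⟨j, hj⟩ := Function.ne_iff.1 hv
  have hP : IsUnit (((1 : Matrix ι ι k).updateCol j v).submatrix id (Equiv.swap j i)) := by
    rw [isUnit_iff_isUnit_det, det_permute', ← cramer_apply, cramer_one]
    exact ((Equiv.Perm.sign _).isUnit.map (Int.castRingHom k)).mul (isUnit_iff_ne_zero.2 hj)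
  exact ⟨hP.unit, by ext; simp⟩

lemma det_fromBlocks_diagonal_unit (a : k) (D : Matrix κ κ k) :
    (fromBlocks (diagonal fun _ : Unit => a) 0 0 D).det = a * D.det := by
  rw [det_fromBlocks_zero₂₁, det_diagonal, Finset.univ_unique, Finset.prod_singleton]

variable [StarRing k]

/-- Equivalence of sesquilinear forms: the matrices `A` and `B` represent the same form in two
different bases. -/
def StarCongruent (A B : Matrix ι ι k) : Prop :=
  ∃ P : (Matrix ι ι k)ˣ, (P : Matrix ι ι k)ᴴ * A * (P : Matrix ι ι k) = B

namespace StarCongruent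

variable {A B C : Matrix ι ι k}

lemma symm (h : StarCongruent A B) : StarCongruent B A := by
  obtain ⟨P, rfl⟩ := h
  refine ⟨P⁻¹, ?_⟩
  have hP : (P⁻¹.val)ᴴ * P.valᴴ = 1 := by rw [← conjTranspose_mul, P.mul_inv, conjTranspose_one]
  rw [← mul_assoc, ← mul_assoc, hP, one_mul, mul_assoc, P.mul_inv, mul_one]

lemma trans (h : StarCongruent A B) (h' : StarCongruent B C) : StarCongruent A C := by
  obtain ⟨P, rfl⟩ := h
  obtain ⟨Q, rfl⟩ := h'
  exact ⟨P * Q, by simp only [Units.val_mul, conjTranspose_mul, mul_assoc]⟩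

lemma isHermitian (h : StarCongruent A B) (hA : A.IsHermitian) : B.IsHermitian := by
  obtain ⟨P, rfl⟩ := h
  exact isHermitian_conjTranspose_mul_mul _ hA

lemma exists_det_eq (h : StarCongruent A B) : ∃ z, z ≠ 0 ∧ B.det = A.det * (z * star z) := by
  obtain ⟨P, rfl⟩ := h
  refine ⟨P.val.det, ((isUnit_iff_isUnit_det _).1 P.isUnit).ne_zero, ?_⟩
  rw [det_mul, det_mul, det_conjTranspose]
  ring

lemma det_ne_zero (h : StarCongruent A B) (hA : A.det ≠ 0) : B.det ≠ 0 := by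
  obtain ⟨z, hz, hdet⟩ := h.exists_det_eq
  exact hdet ▸ mul_ne_zero hA (mul_ne_zero hz (star_ne_zero.2 hz))

lemma exists_star_dotProduct_mulVec_eq (h : StarCongruent A B) (v : ι → k) :
    ∃ w, star w ⬝ᵥ A *ᵥ w = star v ⬝ᵥ B *ᵥ v := by
  obtain ⟨P, rfl⟩ := h
  refine ⟨P.val *ᵥ v, ?_⟩
  rw [star_mulVec, ← dotProduct_mulVec, mulVec_mulVec, mulVec_mulVec, mul_assoc]

lemma submatrix (h : StarCongruent A B) (e : κ ≃ ι) :
    StarCongruent (A.submatrix e e) (B.submatrix e e) := by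
  obtain ⟨P, rfl⟩ := h
  refine ⟨P.map (reindexAlgEquiv k k e.symm : Matrix ι ι k →* Matrix κ κ k), ?_⟩
  change (P.val.submatrix e e)ᴴ * A.submatrix e e * P.val.submatrix e e = _
  rw [conjTranspose_submatrix, submatrix_mul_equiv, submatrix_mul_equiv]

lemma fromBlocks {D D' : Matrix κ κ k} (h : StarCongruent D D') :
    StarCongruent (fromBlocks A 0 0 D) (fromBlocks A 0 0 D') := by
  obtain ⟨P, rfl⟩ := h
  have hP : IsUnit (Matrix.fromBlocks (1 : Matrix ι ι k) 0 0 P.val) := by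
    rw [isUnit_fromBlocks_zero₂₁]
    exact ⟨isUnit_one, P.isUnit⟩
  refine ⟨hP.unit, ?_⟩
  simp [fromBlocks_conjTranspose, fromBlocks_multiply]

end StarCongruent

lemma starCongruent_fromBlocks_sub {A : Matrix ι ι k} (hA : A.IsHermitian) (hA' : IsUnit A)
    (B : Matrix ι κ k) (D : Matrix κ κ k) :
    StarCongruent (fromBlocks A 0 0 (D - Bᴴ * A⁻¹ * B)) (fromBlocks A B Bᴴ D) := by
  have := hA'.invertible
  have hP : IsUnit (fromBlocks 1 (A⁻¹ * B) 0 1 : Matrix (ι ⊕ κ) (ι ⊕ κ) k) := by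
    rw [isUnit_fromBlocks_zero₂₁]
    exact ⟨isUnit_one, isUnit_one⟩
  refine ⟨hP.unit, ?_⟩
  rw [fromBlocks_eq_of_invertible₁₁ A B Bᴴ D]
  simp [fromBlocks_conjTranspose, conjTranspose_nonsing_inv, hA.eq]

lemma exists_starCongruent_fromBlocks {A : Matrix (Unit ⊕ κ) (Unit ⊕ κ) k} (hA : A.IsHermitian)
    {v : Unit ⊕ κ → k} (hv : star v ⬝ᵥ A *ᵥ v ≠ 0) :
    ∃ D, StarCongruent A (fromBlocks (diagonal fun _ => star v ⬝ᵥ A *ᵥ v) 0 0 D) := by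
  set a := star v ⬝ᵥ A *ᵥ v with ha
  have hv0 : v ≠ 0 := by
    rintro rfl
    exact hv (by rw [ha, mulVec_zero, dotProduct_zero])
  obtain ⟨P, hP⟩ := exists_units_col_eq hv0 (Sum.inl ())
  have hcongr : StarCongruent A (P.valᴴ * A * P.val) := ⟨P, rfl⟩
  set B := P.valᴴ * A * P.val with hBdef
  have hB : B.IsHermitian := hcongr.isHermitian hA
  have hBa : B.toBlocks₁₁ = diagonal fun _ => a := by
    ext i j
    simp only [toBlocks₁₁, of_apply, diagonal_apply_eq, hBdef, ha, ← hP, mul_assoc]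
    rfl
  rw [← fromBlocks_toBlocks B, isHermitian_fromBlocks_iff] at hB
  obtain ⟨hB₁₁, hB₁₂, -, -⟩ := hB
  have hunit : IsUnit B.toBlocks₁₁ := by
    rw [hBa, isUnit_diagonal, Pi.isUnit_iff]
    exact fun _ => isUnit_iff_ne_zero.2 hv
  have hsplit := starCongruent_fromBlocks_sub hB₁₁ hunit B.toBlocks₁₂ B.toBlocks₂₂
  rw [hB₁₂, fromBlocks_toBlocks, hBa] at hsplit
  exact ⟨_, hcongr.trans hsplit.symm⟩

lemma exists_star_dotProduct_mulVec_eq_one [NeZero (2 : k)] [Nonempty κ] (hk : BinaryUniversal k)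
    {A : Matrix (Unit ⊕ κ) (Unit ⊕ κ) k} (hA : A.IsHermitian) (hdet : A.det ≠ 0) :
    ∃ v, star v ⬝ᵥ A *ᵥ v = 1 := by
  have hA0 : A ≠ 0 := fun h => hdet (by rw [h, det_zero])
  obtain ⟨v, hv⟩ := exists_star_dotProduct_mulVec_ne_zero hA hA0
  obtain ⟨D, hAD⟩ := exists_starCongruent_fromBlocks hA hv
  have hD : D.IsHermitian := (isHermitian_fromBlocks_iff.1 (hAD.isHermitian hA)).2.2.2
  have hD0 : D ≠ 0 := by
    rintro rfl
    exact hAD.det_ne_zero hdet (by rw [det_fromBlocks_diagonal_unit, det_zero, mul_zero])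
  obtain ⟨w, hw⟩ := exists_star_dotProduct_mulVec_ne_zero hD hD0
  obtain ⟨x, y, hxy⟩ := hk _ _ (isSelfAdjoint_star_dotProduct_mulVec hA v) hv
    (isSelfAdjoint_star_dotProduct_mulVec hD w) hw
  obtain ⟨u, hu⟩ := hAD.exists_star_dotProduct_mulVec_eq (Sum.elim (fun _ => x) (y • w))
  refine ⟨u, hu.trans (Eq.trans ?_ hxy)⟩
  have hstar : star (Sum.elim (fun _ : Unit => x) (y • w)) =
      Sum.elim (fun _ => star x) (star y • star w) := by
    ext (_ | _) <;> simp
  generalize star v ⬝ᵥ A *ᵥ v = a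
  have hdiag : diagonal (fun _ : Unit => a) *ᵥ (fun _ => x) = fun _ => a * x :=
    funext (mulVec_diagonal _ _)
  rw [hstar, fromBlocks_mulVec, sumElim_dotProduct_sumElim, Sum.elim_comp_inl, Sum.elim_comp_inr,
    hdiag, zero_mulVec, zero_mulVec, add_zero, zero_add, mulVec_smul, dotProduct_smul,
    smul_dotProduct, dotProduct, Finset.univ_unique, Finset.sum_singleton, smul_eq_mul, smul_eq_mul]
  ring

lemma exists_starCongruent_fromBlocks_one [NeZero (2 : k)] [Nonempty κ] (hk : BinaryUniversal k)
    {A : Matrix (Unit ⊕ κ) (Unit ⊕ κ) k} (hA : A.IsHermitian) (hdet : A.det ≠ 0) :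
    ∃ D : Matrix κ κ k, D.IsHermitian ∧
      StarCongruent A (fromBlocks (diagonal fun _ => 1) 0 0 D) := by
  obtain ⟨v, hv⟩ := exists_star_dotProduct_mulVec_eq_one hk hA hdet
  obtain ⟨D, hAD⟩ := exists_starCongruent_fromBlocks hA (hv ▸ one_ne_zero)
  rw [hv] at hAD
  exact ⟨D, (isHermitian_fromBlocks_iff.1 (hAD.isHermitian hA)).2.2.2, hAD⟩

lemma starCongruent_of_det_eq [NeZero (2 : k)] (hk : BinaryUniversal k) {n : ℕ}
    {A B : Matrix (Fin n) (Fin n) k} (hA : A.IsHermitian) (hB : B.IsHermitian) (hdet : A.det ≠ 0)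
    {z : k} (hz : z ≠ 0) (hAB : B.det = A.det * (z * star z)) : StarCongruent A B := by
  induction n generalizing z with
  | zero => exact ⟨1, Subsingleton.elim _ _⟩
  | succ n ih =>
    rcases n with _ | n
    · refine ⟨(Units.mk0 z hz).map (scalar (Fin 1)).toMonoidHom, ?_⟩
      ext i j
      fin_cases i; fin_cases j
      rw [det_fin_one, det_fin_one] at hAB
      simp only [RingHom.toMonoidHom_eq_coe, Units.coe_map, Units.val_mk0, MonoidHom.coe_coe,
        scalar_apply, diagonal_conjTranspose, Fin.zero_eta, Fin.isValue, mul_diagonal, diagonal_mul,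
        Pi.star_apply, hAB]
      ring
    have hdet' : B.det ≠ 0 := hAB ▸ mul_ne_zero hdet (mul_ne_zero hz (star_ne_zero.2 hz))
    let e : Unit ⊕ Fin (n + 1) ≃ Fin (n + 2) :=
      Fintype.equivOfCardEq <| by
        simp only [Fintype.card_sum, Fintype.card_unique, Fintype.card_fin]
        omega
    obtain ⟨C, hC, hAC⟩ := exists_starCongruent_fromBlocks_one hk (hA.submatrix e)
      (by rwa [det_submatrix_equiv_self])
    obtain ⟨D, hD, hBD⟩ := exists_starCongruent_fromBlocks_one hk (hB.submatrix e)
      (by rwa [det_submatrix_equiv_self])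
    obtain ⟨x, hx, hxC⟩ := hAC.exists_det_eq
    obtain ⟨y, hy, hyD⟩ := hBD.exists_det_eq
    rw [det_fromBlocks_diagonal_unit, one_mul, det_submatrix_equiv_self] at hxC hyD
    have hCD : StarCongruent C D := by
      refine ih hC hD ?_ (z := z * y / x) (div_ne_zero (mul_ne_zero hz hy) hx) ?_
      · exact hxC ▸ mul_ne_zero hdet (mul_ne_zero hx (star_ne_zero.2 hx))
      · have : star x ≠ 0 := star_ne_zero.2 hx
        rw [hyD, hxC, hAB, star_div₀, star_mul]
        field_simp
    simpa using ((hAC.trans hCD.fromBlocks).trans hBD.symm).submatrix e.symm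

end HermitianForms

section MatrixHilbert90

variable {K ι : Type*} [Field K] [CharZero K] [Fintype ι] [DecidableEq ι] {σ : K →+* K}

lemma exists_det_smul_one_add_smul_ne_zero (hσ : ∀ x, σ (σ x) = x) (hne : ∃ x, σ x ≠ x)
    (M : Matrix ι ι K) : ∃ a, (a • (1 : Matrix ι ι K) + σ a • M).det ≠ 0 := by
  obtain ⟨x, hx⟩ := hne
  obtain ⟨η, hη, hση⟩ : ∃ η, η ≠ 0 ∧ σ η = -η :=
    ⟨x - σ x, sub_ne_zero.2 (Ne.symm hx), by rw [map_sub, hσ, neg_sub]⟩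
  have hσa (t : ℕ) : σ (t + η) = t - η := by rw [map_add, map_natCast, hση, sub_eq_add_neg]
  have ha (t : ℕ) : (t : K) - η ≠ 0 := by
    intro h
    have hη' : -η = η := by rw [← hση, ← sub_eq_zero.1 h, map_natCast]
    exact hη (self_eq_neg.1 hη'.symm)
  have hinj : Function.Injective fun t : ℕ => -((t : K) + η) / (t - η) := by
    intro s t hst
    have h := (div_eq_div_iff (ha s) (ha t)).1 hst
    have : 2 * η * ((s : K) - t) = 0 := by linear_combination h
    exact_mod_cast sub_eq_zero.1 ((mul_eq_zero.1 this).resolve_left (by simpa using hη))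
  obtain ⟨_, ⟨t, rfl⟩, ht⟩ := (Set.infinite_range_of_injective hinj).exists_notMem_finite
    (Polynomial.finite_setOfPred_isRoot M.charpoly_monic.ne_zero)
  refine ⟨t + η, ?_⟩
  have hscale : ((t : K) + η) • (1 : Matrix ι ι K) + σ (t + η) • M =
      -((t : K) - η) • (scalar ι (-((t : K) + η) / (t - η)) - M) := by
    rw [hσa, scalar_apply, ← smul_one_eq_diagonal, smul_sub, smul_smul, neg_mul,
      mul_div_cancel₀ _ (ha t), neg_neg, neg_smul, sub_neg_eq_add]
  rw [hscale, det_smul, ← eval_charpoly]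
  exact mul_ne_zero (pow_ne_zero _ (neg_ne_zero.2 (ha t))) ht

-- As in the scalar Hilbert 90, the solution is an average `a • 1 + σ a • x`.
lemma exists_mul_map_eq_self (hσ : ∀ x, σ (σ x) = x) (hne : ∃ x, σ x ≠ x) {x : Matrix ι ι K}
    (hx : x * x.map σ = 1) : ∃ z : Matrix ι ι K, z.det ≠ 0 ∧ x * z.map σ = z := by
  obtain ⟨a, ha⟩ := exists_det_smul_one_add_smul_ne_zero hσ hne x
  refine ⟨_, ha, ?_⟩
  rw [Matrix.map_add _ (map_add σ), Matrix.map_smul' _ _ _ (map_mul σ),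
    Matrix.map_smul' _ _ _ (map_mul σ), hσ, Matrix.map_one _ (map_zero σ) (map_one σ), mul_add,
    Matrix.mul_smul, Matrix.mul_smul, hx, mul_one, add_comm]

end MatrixHilbert90

section HermitianProjection

variable {k K ι : Type*} [Field k] [StarRing k] [Fintype ι] {J : Matrix ι ι k} {v : ι → k}

/-- The orthogonal projection onto the line spanned by `v`, for the hermitian form `J`; it is `0`
if `v` is isotropic. -/
def hermitianProjection (J : Matrix ι ι k) (v : ι → k) : Matrix ι ι k :=
  vecMulVec v ((star v ⬝ᵥ J *ᵥ v)⁻¹ • (star v ᵥ* J))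

lemma hermitianProjection_mul_self (J : Matrix ι ι k) (v : ι → k) :
    hermitianProjection J v * hermitianProjection J v = hermitianProjection J v := by
  rw [hermitianProjection, vecMulVec_mul_vecMulVec, smul_dotProduct, ← dotProduct_mulVec,
    smul_eq_mul]
  by_cases hv : star v ⬝ᵥ J *ᵥ v = 0
  · simp [hv]
  · rw [inv_mul_cancel₀ hv, one_smul]

lemma conjTranspose_hermitianProjection_mul (hJ : J.IsHermitian) (v : ι → k) :
    (hermitianProjection J v)ᴴ * J = J * hermitianProjection J v := by
  rw [hermitianProjection, conjTranspose_vecMulVec, vecMulVec_mul, mul_vecMulVec, star_smul,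
    star_vecMul, star_star, hJ.eq, star_inv₀, (isSelfAdjoint_star_dotProduct_mulVec hJ v).star_eq,
    smul_vecMulVec, vecMulVec_smul]

lemma det_one_add_smul_map_hermitianProjection [DecidableEq ι] [Field K] (f : k →+* K)
    (hv : star v ⬝ᵥ J *ᵥ v ≠ 0) (t : K) :
    (1 + t • (hermitianProjection J v).map f).det = 1 + t := by
  have hmap : t • (hermitianProjection J v).map f =
      vecMulVec (f ∘ v) (t • f ∘ ((star v ⬝ᵥ J *ᵥ v)⁻¹ • (star v ᵥ* J))) := by
    ext a b
    simp only [hermitianProjection, Matrix.smul_apply, map_apply, vecMulVec_apply, map_mul,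
      Pi.smul_apply, Function.comp_apply, smul_eq_mul]
    ring
  rw [hmap, vecMulVec_eq Unit, det_one_add_replicateCol_mul_replicateRow, smul_dotProduct,
    ← RingHom.map_dotProduct, smul_dotProduct, ← dotProduct_mulVec, smul_eq_mul, smul_eq_mul,
    inv_mul_cancel₀ hv, map_one, mul_one]

end HermitianProjection

section UnitaryOrbits

lemma det_mul_inv_det_eq_div {K ι : Type*} [Field K] [Fintype ι] [DecidableEq ι] {σ : K →+* K}
    {x x' z z' : Matrix ι ι K} (hz : z.det ≠ 0) (hz' : z'.det ≠ 0) (hxz : x * z.map σ = z)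
    (hxz' : x' * z'.map σ = z') :
    x'.det * x.det⁻¹ = z'.det / z.det / σ (z'.det / z.det) := by
  have det_eq_div {x z : Matrix ι ι K} (hz : z.det ≠ 0) (hxz : x * z.map σ = z) :
      x.det = z.det / σ z.det := by
    rw [eq_div_iff ((map_ne_zero σ).2 hz), RingHom.map_det, RingHom.mapMatrix_apply, ← det_mul, hxz]
  rw [det_eq_div hz hxz, det_eq_div hz' hxz', map_div₀, ← div_eq_mul_inv, div_div_div_comm]

variable {K : Type} [Field K] {σ τ : K →+* K} {n : ℕ} {j : Matrix (Fin n) (Fin n) K}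

lemma det_mul_map_det_of_Gj {g : Matrix (Fin n) (Fin n) K} (hj : j.det ≠ 0) (hg : Gj τ j g) :
    g.det * τ g.det = 1 := by
  have h := congrArg det hg.2
  rw [det_mul, det_mul, det_transpose, ← RingHom.mapMatrix_apply, ← RingHom.map_det] at h
  exact mul_left_cancel₀ hj (by linear_combination h)

lemma det_mem_oneInter_of_Xj {x : Matrix (Fin n) (Fin n) K} (hj : j.det ≠ 0) (hx : Xj σ τ j x) :
    x.det ∈ oneInter σ τ := by
  refine ⟨det_mul_map_det_of_Gj hj hx.1, ?_⟩
  have h := congrArg det hx.2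
  rwa [det_mul, ← RingHom.mapMatrix_apply, ← RingHom.map_det, det_one] at h

lemma Xj_one : Xj σ τ j 1 := by
  refine ⟨⟨isUnit_one, ?_⟩, ?_⟩
  · rw [Matrix.map_one _ (map_zero τ) (map_one τ), transpose_one, one_mul, mul_one]
  · rw [Matrix.map_one _ (map_zero σ) (map_one σ), one_mul]

lemma det_mul_inv_det_mem_Gam_of_orbGj {x x' : Matrix (Fin n) (Fin n) K} (hj : j.det ≠ 0)
    (hx : IsUnit x) (h : orbGj σ τ j x x') : x'.det * x.det⁻¹ ∈ Gam σ τ := by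
  obtain ⟨g, hg, rfl⟩ := h
  have hx0 : x.det ≠ 0 := ((isUnit_iff_isUnit_det x).1 hx).ne_zero
  refine ⟨g.det, det_mul_map_det_of_Gj hj hg, ?_⟩
  rw [det_mul, det_mul, det_nonsing_inv, ← RingHom.mapMatrix_apply, ← RingHom.map_det,
    Ring.inverse_eq_inv', mul_right_comm, mul_assoc g.det, mul_inv_cancel₀ hx0, mul_one]

variable [StarRing K]

lemma Xj_one_add_sub_one_smul {P : Matrix (Fin n) (Fin n) K} (hP : P * P = P) (hσP : P.map σ = P)
    (hPj : Pᴴ * j = j * P) (hdet : ∀ t : K, (1 + t • P).det = 1 + t) {b : K}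
    (hb : b ∈ oneInter σ star) : Xj σ star j (1 + (b - 1) • P) := by
  have hb0 : b ≠ 0 := left_ne_zero_of_mul_eq_one hb.1
  refine ⟨⟨?_, ?_⟩, ?_⟩
  · rw [isUnit_iff_isUnit_det, hdet, add_sub_cancel]
    exact hb0.isUnit
  · change (1 + (b - 1) • P)ᴴ * j * (1 + (b - 1) • P) = j
    have hexpand : (1 + (b - 1) • P)ᴴ * j * (1 + (b - 1) • P) =
        j + (b * star b - 1) • (j * P) := by
      rw [conjTranspose_add, conjTranspose_one, conjTranspose_smul, star_sub, star_one, add_mul,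
        one_mul, Matrix.smul_mul, hPj, mul_add, mul_one, Matrix.mul_smul, add_mul, Matrix.smul_mul,
        Matrix.mul_assoc, hP]
      module
    rw [hexpand, hb.1, sub_self, zero_smul, add_zero]
  · have hexpand : (1 + (b - 1) • P) * (1 + (b - 1) • P).map σ = 1 + (b * σ b - 1) • P := by
      rw [Matrix.map_add _ (map_add σ), Matrix.map_one _ (map_zero σ) (map_one σ),
        Matrix.map_smul' _ _ _ (map_mul σ), hσP, map_sub, map_one, add_mul, one_mul,
        Matrix.smul_mul, mul_add, mul_one, Matrix.mul_smul, hP]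
      module
    rw [hexpand, hb.2, sub_self, zero_smul, add_zero]

lemma orbGj_of_conjTranspose_mul_mul_eq {x x' z z' : Matrix (Fin n) (Fin n) K} (hz : z.det ≠ 0)
    (hz' : z'.det ≠ 0) (hxz : x * z.map σ = z) (hxz' : x' * z'.map σ = z')
    (h : zᴴ * j * z = z'ᴴ * j * z') : orbGj σ star j x x' := by
  lift z to (Matrix (Fin n) (Fin n) K)ˣ using (isUnit_iff_isUnit_det z).2 hz.isUnit
  lift z' to (Matrix (Fin n) (Fin n) K)ˣ using (isUnit_iff_isUnit_det z').2 hz'.isUnit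
  let S := Units.map (σ.mapMatrix (m := Fin n)).toMonoidHom
  have hx : x = z * (S z)⁻¹ := (Units.eq_mul_inv_iff_mul_eq _).2 hxz
  have hx' : x' = z' * (S z')⁻¹ := (Units.eq_mul_inv_iff_mul_eq _).2 hxz'
  refine ⟨(z' * z⁻¹ : (Matrix (Fin n) (Fin n) K)ˣ), ⟨Units.isUnit _, ?_⟩, ?_⟩
  · have hzinv : (z⁻¹.val)ᴴ * z.valᴴ = 1 := by
      rw [← conjTranspose_mul, z.mul_inv, conjTranspose_one]
    change (z' * z⁻¹).valᴴ * j * (z' * z⁻¹).val = j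
    calc (z' * z⁻¹).valᴴ * j * (z' * z⁻¹).val
        = (z⁻¹.val)ᴴ * (z'.valᴴ * j * z'.val) * z⁻¹.val := by
          simp only [Units.val_mul, conjTranspose_mul, mul_assoc]
      _ = ((z⁻¹.val)ᴴ * z.valᴴ) * j * (z.val * z⁻¹.val) := by rw [← h]; simp only [mul_assoc]
      _ = j := by rw [hzinv, z.mul_inv, one_mul, mul_one]
  · change x' = (z' * z⁻¹).val * x * (S (z' * z⁻¹)).val⁻¹
    rw [hx, hx', ← coe_units_inv]
    norm_cast
    rw [map_mul, map_inv]
    group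

end UnitaryOrbits

section Descent

variable {k K ι : Type*} [Field k] [Field K] [Algebra k K] {σ : K →+* K}

lemma exists_map_algebraMap_eq (hfix : ∀ x, σ x = x ↔ x ∈ (algebraMap k K).range)
    {M : Matrix ι ι K} (hM : M.map σ = M) : ∃ A : Matrix ι ι k, A.map (algebraMap k K) = M := by
  choose A hA using fun a b => (hfix (M a b)).1 (congrFun₂ hM a b)
  exact ⟨of A, Matrix.ext hA⟩

lemma map_map_algebraMap (hfix : ∀ x, σ x = x ↔ x ∈ (algebraMap k K).range) (A : Matrix ι ι k) :
    (A.map (algebraMap k K)).map σ = A.map (algebraMap k K) :=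
  Matrix.ext fun a b => (hfix _).2 ⟨A a b, rfl⟩

lemma algebraMap_det_eq_of_map_eq_conjTranspose_mul_mul [Fintype ι] [DecidableEq ι] [StarRing K]
    {J A : Matrix ι ι k} {z : Matrix ι ι K}
    (h : A.map (algebraMap k K) = zᴴ * J.map (algebraMap k K) * z) :
    algebraMap k K A.det = algebraMap k K J.det * (z.det * star z.det) := by
  rw [RingHom.map_det, RingHom.map_det, RingHom.mapMatrix_apply, RingHom.mapMatrix_apply, h,
    det_mul, det_mul, det_conjTranspose]
  ring

variable [StarRing k] [StarRing K] [StarModule k K]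

lemma conjTranspose_map_algebraMap (A : Matrix ι ι k) :
    (A.map (algebraMap k K))ᴴ = Aᴴ.map (algebraMap k K) :=
  (conjTranspose_map _ algebraMap_star_comm).symm

lemma isHermitian_map_algebraMap_iff {A : Matrix ι ι k} :
    (A.map (algebraMap k K)).IsHermitian ↔ A.IsHermitian := by
  rw [IsHermitian, conjTranspose_map_algebraMap]
  exact (Matrix.map_injective (algebraMap k K).injective).eq_iff

end Descent

section DescendedUnitaryOrbits

variable {k : Type*} {K : Type} [Field k] [Field K] [Algebra k K] [StarRing k] [StarRing K]
  [StarModule k K] {σ : K →+* K} {n : ℕ} {J : Matrix (Fin n) (Fin n) k}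

lemma exists_Xj_det_eq [NeZero (2 : k)] (hfix : ∀ x, σ x = x ↔ x ∈ (algebraMap k K).range)
    (hJ : J.IsHermitian) (hJ0 : J ≠ 0) {b : K} (hb : b ∈ oneInter σ star) :
    ∃ x, Xj σ star (J.map (algebraMap k K)) x ∧ x.det = b := by
  obtain ⟨v, hv⟩ := exists_star_dotProduct_mulVec_ne_zero hJ hJ0
  have hdet := det_one_add_smul_map_hermitianProjection (algebraMap k K) hv
  refine ⟨_, Xj_one_add_sub_one_smul ?_ (map_map_algebraMap hfix _) ?_ hdet hb, ?_⟩
  · rw [← Matrix.map_mul, hermitianProjection_mul_self]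
  · rw [conjTranspose_map_algebraMap, ← Matrix.map_mul, ← Matrix.map_mul,
      conjTranspose_hermitianProjection_mul hJ]
  · rw [hdet, add_sub_cancel]

lemma exists_map_algebraMap_eq_conjTranspose_mul_mul
    (hστ : ∀ x, σ (star x) = star (σ x)) (hfix : ∀ x, σ x = x ↔ x ∈ (algebraMap k K).range)
    (hJ : J.IsHermitian) {x z : Matrix (Fin n) (Fin n) K}
    (hx : Gj star (J.map (algebraMap k K)) x) (hxz : x * z.map σ = z) :
    ∃ A : Matrix (Fin n) (Fin n) k, A.IsHermitian ∧
      A.map (algebraMap k K) = zᴴ * J.map (algebraMap k K) * z := by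
  have hform : xᴴ * J.map (algebraMap k K) * x = J.map (algebraMap k K) := hx.2
  obtain ⟨A, hA⟩ := exists_map_algebraMap_eq (M := zᴴ * J.map (algebraMap k K) * z) hfix <| by
    calc (zᴴ * J.map (algebraMap k K) * z).map σ
        = (z.map σ)ᴴ * (xᴴ * J.map (algebraMap k K) * x) * z.map σ := by
          rw [hform, Matrix.map_mul, Matrix.map_mul, map_map_algebraMap hfix,
            conjTranspose_map σ hστ]
      _ = (x * z.map σ)ᴴ * J.map (algebraMap k K) * (x * z.map σ) := by
          simp only [conjTranspose_mul, mul_assoc]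
      _ = zᴴ * J.map (algebraMap k K) * z := by rw [hxz]
  refine ⟨A, (isHermitian_map_algebraMap_iff (K := K)).1 ?_, hA⟩
  rw [hA]
  exact isHermitian_conjTranspose_mul_mul _ (isHermitian_map_algebraMap_iff.2 hJ)

lemma starCongruent_of_det_mul_inv_det_mem_Gam [NeZero (2 : k)]
    (hfix : ∀ x, σ x = x ↔ x ∈ (algebraMap k K).range) (hk : BinaryUniversal k)
    (hJ0 : J.det ≠ 0) {A B : Matrix (Fin n) (Fin n) k} (hA : A.IsHermitian) (hB : B.IsHermitian)
    {x x' z z' : Matrix (Fin n) (Fin n) K} (hz : z.det ≠ 0) (hz' : z'.det ≠ 0)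
    (hxz : x * z.map σ = z) (hxz' : x' * z'.map σ = z')
    (hAz : A.map (algebraMap k K) = zᴴ * J.map (algebraMap k K) * z)
    (hBz : B.map (algebraMap k K) = z'ᴴ * J.map (algebraMap k K) * z')
    (h : x'.det * x.det⁻¹ ∈ Gam σ star) : StarCongruent A B := by
  have hAdet := algebraMap_det_eq_of_map_eq_conjTranspose_mul_mul hAz
  have hBdet := algebraMap_det_eq_of_map_eq_conjTranspose_mul_mul hBz
  have hstarz : star z.det ≠ 0 := star_ne_zero.2 hz
  have hA0 : A.det ≠ 0 := by
    rw [← map_ne_zero (algebraMap k K), hAdet]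
    exact mul_ne_zero ((map_ne_zero _).2 hJ0) (mul_ne_zero hz hstarz)
  rw [det_mul_inv_det_eq_div hz hz' hxz hxz'] at h
  obtain ⟨w, hw, hσw, hzw⟩ := exists_eq_mul_of_div_mem_Gam (τ := starRingEnd K)
    (div_ne_zero hz' hz) h
  obtain ⟨w, rfl⟩ := (hfix w).1 hσw
  refine starCongruent_of_det_eq hk hA hB hA0 ((map_ne_zero _).1 hw)
    ((algebraMap k K).injective ?_)
  rw [map_mul, map_mul, algebraMap_star_comm, hAdet, hBdet]
  rw [starRingEnd_apply, starRingEnd_apply, star_div₀] at hzw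
  field_simp at hzw
  linear_combination algebraMap k K J.det * hzw

-- Hilbert 90 writes `x = z * σ(z)⁻¹`; the orbit of `x` is then the class of the hermitian form
-- `zᴴ * J * z` over `k`, which is determined by its discriminant.
lemma orbGj_of_det_mul_inv_det_mem_Gam [CharZero k] (hσ : ∀ x, σ (σ x) = x)
    (hne : ∃ x, σ x ≠ x) (hστ : ∀ x, σ (star x) = star (σ x))
    (hfix : ∀ x, σ x = x ↔ x ∈ (algebraMap k K).range) (hk : BinaryUniversal k)
    (hJ : J.IsHermitian) (hJ0 : J.det ≠ 0) {x x' : Matrix (Fin n) (Fin n) K}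
    (hx : Xj σ star (J.map (algebraMap k K)) x) (hx' : Xj σ star (J.map (algebraMap k K)) x')
    (h : x'.det * x.det⁻¹ ∈ Gam σ star) : orbGj σ star (J.map (algebraMap k K)) x x' := by
  have : CharZero K := charZero_of_injective_algebraMap (algebraMap k K).injective
  obtain ⟨z, hz, hxz⟩ := exists_mul_map_eq_self hσ hne hx.2
  obtain ⟨z', hz', hxz'⟩ := exists_mul_map_eq_self hσ hne hx'.2
  obtain ⟨A, hA, hAz⟩ := exists_map_algebraMap_eq_conjTranspose_mul_mul hστ hfix hJ hx.1 hxz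
  obtain ⟨B, hB, hBz⟩ := exists_map_algebraMap_eq_conjTranspose_mul_mul hστ hfix hJ hx'.1 hxz'
  obtain ⟨P, hP⟩ := starCongruent_of_det_mul_inv_det_mem_Gam hfix hk hJ0 hA hB hz hz' hxz hxz'
    hAz hBz h
  have hP0 : (P.val.map (algebraMap k K)).det ≠ 0 := by
    rw [← RingHom.mapMatrix_apply, ← RingHom.map_det, map_ne_zero]
    exact ((isUnit_iff_isUnit_det _).1 P.isUnit).ne_zero
  refine orbGj_of_conjTranspose_mul_mul_eq (z := z * P.val.map (algebraMap k K)) ?_ hz' ?_ hxz' ?_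
  · rw [det_mul]
    exact mul_ne_zero hz hP0
  · rw [Matrix.map_mul, map_map_algebraMap hfix, ← mul_assoc, hxz]
  · rw [← hBz, ← hP, Matrix.map_mul, Matrix.map_mul, hAz, ← conjTranspose_map_algebraMap,
      conjTranspose_mul]
    simp only [mul_assoc]

end DescendedUnitaryOrbits

section InvolutionStar

/-- The star ring structure on a commutative ring given by an involution `τ`. -/
abbrev starRingOfInvolution {R : Type*} [CommSemiring R] (τ : R →+* R) (hτ : ∀ x, τ (τ x) = x) :
    StarRing R where
  star := τ
  star_involutive := hτ
  star_mul x y := by rw [map_mul, mul_comm]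
  star_add := map_add τ

variable {L K : Type*} [Field L] [Field K] [Algebra L K]

/-- The star ring structure on the fixed field of `σ` given by the restriction of an involution `τ`
commuting with `σ`. -/
abbrev starRingFixedField (σ τ : K ≃ₐ[L] K) (hτ : ∀ x, τ (τ x) = x)
    (hστ : ∀ x, σ (τ x) = τ (σ x)) :
    StarRing (IntermediateField.fixedField (Subgroup.zpowers σ)) :=
  starRingOfInvolution ((τ : K →+* K).restrict _ _ fun x hx => mem_fixedField_zpowers.2 <| by
    rw [RingHom.coe_coe, hστ, mem_fixedField_zpowers.1 hx]) fun x => Subtype.ext (hτ x)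

lemma starModule_fixedField {σ τ : K ≃ₐ[L] K} (hτ : ∀ x, τ (τ x) = x)
    (hστ : ∀ x, σ (τ x) = τ (σ x)) :
    letI := starRingOfInvolution (τ : K →+* K) hτ
    letI := starRingFixedField σ τ hτ hστ
    StarModule (IntermediateField.fixedField (Subgroup.zpowers σ)) K :=
  letI := starRingOfInvolution (τ : K →+* K) hτ
  letI := starRingFixedField σ τ hτ hστ
  ⟨fun a x => map_mul τ (a : K) x⟩

end InvolutionStar

section InvolutionForms

variable {K : Type} [Field K] {n : ℕ} {j : Matrix (Fin n) (Fin n) K}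

lemma Gj_smul_eq (τ : K → K) {u : K} (hu : u ≠ 0) : Gj τ (u • j) = Gj τ j := by
  ext g
  rw [Gj, Gj, Matrix.mul_smul, Matrix.smul_mul, (smul_right_injective _ hu).eq_iff]

lemma exists_hermitian_Gj_eq_of_inYnF {σ τ : K →+* K}
    (hδ : ∃ δ, δ ≠ 0 ∧ σ δ = δ ∧ τ δ = -δ) {ε : K} (hε : ε = 1 ∨ ε = -1) (hj : inYnF σ τ ε j) :
    ∃ j' : Matrix (Fin n) (Fin n) K, (j'.map τ)ᵀ = j' ∧ j'.map σ = j' ∧ j'.det ≠ 0 ∧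
      Gj τ j' = Gj τ j := by
  obtain ⟨hj, hσj, hτj⟩ := hj
  obtain ⟨u, hu, hσu, hτu⟩ : ∃ u, u ≠ 0 ∧ σ u = u ∧ τ u * ε = u := by
    rcases hε with rfl | rfl
    · exact ⟨1, one_ne_zero, map_one σ, by rw [map_one, one_mul]⟩
    · obtain ⟨δ, hδ, hσδ, hτδ⟩ := hδ
      exact ⟨δ, hδ, hσδ, by rw [hτδ, neg_mul_neg, mul_one]⟩
  refine ⟨u • j, ?_, ?_, ?_, Gj_smul_eq _ hu⟩
  · rw [Matrix.map_smul' _ _ _ (map_mul τ), transpose_smul, hτj, smul_smul, hτu]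
  · rw [Matrix.map_smul' _ _ _ (map_mul σ), hσu, show j.map σ = j from Matrix.ext hσj]
  · rw [det_smul]
    exact mul_ne_zero (pow_ne_zero _ hu) ((isUnit_iff_isUnit_det j).1 hj).ne_zero

variable {L : Type*} [Field L] [Algebra L K] {σ τ : K ≃ₐ[L] K}

lemma exists_isHermitian_Gj_map_algebraMap_eq (hτ : ∀ x, τ (τ x) = x)
    (hστ : ∀ x, σ (τ x) = τ (σ x)) (hδ : ∃ δ, δ ≠ 0 ∧ σ δ = δ ∧ τ δ = -δ) {ε : K}
    (hε : ε = 1 ∨ ε = -1) (hj : inYnF σ τ ε j) :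
    letI := starRingFixedField σ τ hτ hστ
    ∃ J : Matrix (Fin n) (Fin n) (IntermediateField.fixedField (Subgroup.zpowers σ)),
      J.IsHermitian ∧ J.det ≠ 0 ∧ Gj τ (J.map (algebraMap _ K)) = Gj τ j := by
  obtain ⟨j', hτj, hσj, hdet, hG⟩ :=
    exists_hermitian_Gj_eq_of_inYnF (σ := (σ : K →+* K)) (τ := (τ : K →+* K)) hδ hε hj
  obtain ⟨J, rfl⟩ :=
    exists_map_algebraMap_eq (fun _ => map_eq_self_iff_mem_range_algebraMap) hσj
  let := starRingOfInvolution (τ : K →+* K) hτ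
  let := starRingFixedField σ τ hτ hστ
  have := starModule_fixedField hτ hστ
  refine ⟨J, (isHermitian_map_algebraMap_iff (K := K)).1 hτj, ?_, hG⟩
  rwa [← RingHom.mapMatrix_apply, ← RingHom.map_det, map_ne_zero] at hdet

lemma exists_Xj_det_eq_of_inYnF [NeZero (2 : K)] (hτ : ∀ x, τ (τ x) = x)
    (hστ : ∀ x, σ (τ x) = τ (σ x)) (hδ : ∃ δ, δ ≠ 0 ∧ σ δ = δ ∧ τ δ = -δ) (hn : 1 ≤ n) {ε : K}
    (hε : ε = 1 ∨ ε = -1) (hj : inYnF σ τ ε j) {b : K} (hb : b ∈ oneInter σ τ) :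
    ∃ x, Xj σ τ j x ∧ x.det = b := by
  let := starRingOfInvolution (τ : K →+* K) hτ
  let := starRingFixedField σ τ hτ hστ
  have := starModule_fixedField hτ hστ
  have : NeZero (2 : IntermediateField.fixedField (Subgroup.zpowers σ)) :=
    ⟨fun h => NeZero.ne (2 : K) (congrArg Subtype.val h)⟩
  obtain ⟨J, hJ, hdet, hG⟩ := exists_isHermitian_Gj_map_algebraMap_eq hτ hστ hδ hε hj
  have : NeZero n := ⟨by omega⟩
  simp only [Xj, ← hG]
  exact exists_Xj_det_eq (σ := (σ : K →+* K)) (fun _ => map_eq_self_iff_mem_range_algebraMap) hJ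
    (fun h => hdet (by rw [h, det_zero])) hb

end InvolutionForms

section PadicUnitaryOrbits

variable (p : ℕ) [Fact p.Prime] {K : Type} [Field K] [Algebra ℚ_[p] K] [FiniteDimensional ℚ_[p] K]
  {σ τ : K ≃ₐ[ℚ_[p]] K}

lemma binaryUniversal_fixedField_padic (hτ : ∀ x, τ (τ x) = x) (hστ : ∀ x, σ (τ x) = τ (σ x))
    (hδ : ∃ δ, δ ≠ 0 ∧ σ δ = δ ∧ τ δ = -δ) :
    letI := starRingFixedField σ τ hτ hστ
    BinaryUniversal (IntermediateField.fixedField (Subgroup.zpowers σ)) := by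
  let := starRingFixedField σ τ hτ hστ
  obtain ⟨δ, hδ, hσδ, hτδ⟩ := hδ
  have : CharZero K := charZero_of_injective_algebraMap (algebraMap ℚ_[p] K).injective
  refine binaryUniversal_padic p (fun r => Subtype.ext (τ.commutes r))
    ⟨⟨δ, mem_fixedField_zpowers.2 hσδ⟩, fun h => hδ (neg_eq_self.1 ?_)⟩
  exact hτδ.symm.trans (congrArg Subtype.val h)

lemma orbGj_iff_det_mul_inv_det_mem_Gam (hσ : ∀ x, σ (σ x) = x) (hτ : ∀ x, τ (τ x) = x)
    (hστ : ∀ x, σ (τ x) = τ (σ x)) (hσ1 : ∃ x, σ x ≠ x)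
    (hδ : ∃ δ, δ ≠ 0 ∧ σ δ = δ ∧ τ δ = -δ) {n : ℕ} {j : Matrix (Fin n) (Fin n) K} {ε : K}
    (hε : ε = 1 ∨ ε = -1) (hj : inYnF σ τ ε j) {x x' : Matrix (Fin n) (Fin n) K}
    (hx : Xj σ τ j x) (hx' : Xj σ τ j x') :
    orbGj σ τ j x x' ↔ x'.det * x.det⁻¹ ∈ Gam σ τ := by
  let := starRingOfInvolution (τ : K →+* K) hτ
  let := starRingFixedField σ τ hτ hστ
  have := starModule_fixedField hτ hστ
  have : CharZero (IntermediateField.fixedField (Subgroup.zpowers σ)) :=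
    charZero_of_injective_algebraMap (algebraMap ℚ_[p] _).injective
  obtain ⟨J, hJ, hdet, hG⟩ := exists_isHermitian_Gj_map_algebraMap_eq hτ hστ hδ hε hj
  constructor
  · exact det_mul_inv_det_mem_Gam_of_orbGj (σ := (σ : K →+* K)) (τ := (τ : K →+* K))
      ((isUnit_iff_isUnit_det j).1 hj.1).ne_zero hx.1.1
  · simp only [Xj, orbGj, ← hG] at hx hx' ⊢
    exact orbGj_of_det_mul_inv_det_mem_Gam (σ := (σ : K →+* K)) hσ hσ1 hστ
      (fun _ => map_eq_self_iff_mem_range_algebraMap)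
      (binaryUniversal_fixedField_padic p hτ hστ hδ) hJ hdet hx hx'

end PadicUnitaryOrbits

/-- In the unitary case, the subgroup `Γ = {a·σ(a)⁻¹ : a ∈ (E'/E)₁}` has
index two in the group `(E'/E)₁ ∩ (E'/F')₁`, and the two `G^j(E)`-orbits in `X^j` are
`{x ∈ X^j : det x ∈ Γ} = G^j(E)·I_n` and `{x ∈ X^j : det x ∉ Γ}`. -/
theorem stmt_7 (p : ℕ) [Fact p.Prime]
    (E' : Type) [Field E'] [Algebra ℚ_[p] E'] [FiniteDimensional ℚ_[p] E']
    (σ τ : E' ≃ₐ[ℚ_[p]] E')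
    (hσ2 : σ * σ = 1) (hτ2 : τ * τ = 1) (hcomm : σ * τ = τ * σ)
    (hσ1 : σ ≠ 1) (hτ1 : τ ≠ 1) (hστ : σ ≠ τ)
    (ε : E') (hε : ε = 1 ∨ ε = -1)
    (n : ℕ) (hn : 1 ≤ n)
    (j : Matrix (Fin n) (Fin n) E')
    (hj : inYnF ⇑σ ⇑τ ε j) :
    -- Γ is a subgroup of (E'/E)₁ ∩ (E'/F')₁ of index two
    (Gam ⇑σ ⇑τ ⊆ oneInter ⇑σ ⇑τ) ∧
    (∃ b, b ∈ oneInter ⇑σ ⇑τ ∧ b ∉ Gam ⇑σ ⇑τ ∧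
      ∀ c ∈ oneInter ⇑σ ⇑τ, c ∈ Gam ⇑σ ⇑τ ∨ c * b⁻¹ ∈ Gam ⇑σ ⇑τ) ∧
    -- {x ∈ X^j : det x ∈ Γ} is exactly the orbit of the identity
    (∀ x, Xj ⇑σ ⇑τ j x → (x.det ∈ Gam ⇑σ ⇑τ ↔ orbGj ⇑σ ⇑τ j 1 x)) ∧
    -- {x ∈ X^j : det x ∉ Γ} is nonempty and is a single orbit
    (∃ x, Xj ⇑σ ⇑τ j x ∧ x.det ∉ Gam ⇑σ ⇑τ) ∧
    (∀ x x', Xj ⇑σ ⇑τ j x → Xj ⇑σ ⇑τ j x' →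
      x.det ∉ Gam ⇑σ ⇑τ → x'.det ∉ Gam ⇑σ ⇑τ → orbGj ⇑σ ⇑τ j x x') := by
  have hσ := AlgEquiv.congr_fun hσ2
  have hτ := AlgEquiv.congr_fun hτ2
  have hcomm' := AlgEquiv.congr_fun hcomm
  have : CharZero E' := charZero_of_injective_algebraMap (algebraMap ℚ_[p] E').injective
  have hστ' : ∃ x, σ x ≠ τ x := DFunLike.ne_iff.1 hστ
  have hδ : ∃ δ, δ ≠ 0 ∧ σ δ = δ ∧ τ δ = -δ :=
    exists_fixed_of_map_eq_neg (σ := (σ : E' →+* E')) (τ := (τ : E' →+* E')) two_ne_zero hσ hτ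
      hcomm' (DFunLike.ne_iff.1 hτ1) hστ'
  have hindex := relIndex_map_involTwist_ker_involNorm_algEquiv p hσ2 hτ2 hcomm hσ1 hτ1 hστ
  have hsub := Gam_subset_oneInter (σ := (σ : E' →+* E')) (τ := (τ : E' →+* E')) hσ hcomm'
  obtain ⟨b, hb, hbΓ⟩ := exists_mem_oneInter_notMem_Gam (hindex.trans_ne (by decide))
  have hj0 : j.det ≠ 0 := ((isUnit_iff_isUnit_det j).1 hj.1).ne_zero
  have hdet {x} (hx : Xj σ τ j x) : x.det ∈ oneInter σ τ :=
    det_mem_oneInter_of_Xj (σ := (σ : E' →+* E')) (τ := (τ : E' →+* E')) hj0 hx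
  have horb {x x'} := orbGj_iff_det_mul_inv_det_mem_Gam p hσ hτ hcomm' (DFunLike.ne_iff.1 hσ1) hδ
    hε hj (x := x) (x' := x')
  obtain ⟨x₀, hx₀, hx₀b⟩ := exists_Xj_det_eq_of_inYnF hτ hcomm' hδ hn hε hj hb
  refine ⟨hsub, ⟨b, hb, hbΓ, fun c hc => or_iff_not_imp_left.2
    (mul_inv_mem_Gam_of_notMem hindex hb hc hbΓ)⟩, fun x hx => ?_, ⟨x₀, hx₀, hx₀b ▸ hbΓ⟩,
    fun x x' hx hx' hxΓ hx'Γ => (horb hx hx').2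
      (mul_inv_mem_Gam_of_notMem hindex (hdet hx) (hdet hx') hxΓ hx'Γ)⟩
  rw [horb (Xj_one (σ := (σ : E' →+* E')) (τ := (τ : E' →+* E'))) hx, det_one, inv_one, mul_one]
end

section
/- In the unitary case, for every a ∈ (E'/E)_1 ∩ (E'/F')_1 there exists x ∈ X^j with det x = a. -/
open Matrix

open GaloisPair

/-!
The element `x` is a dilation `1 + (a - 1) P`, where `P` is the orthogonal projection onto a line
spanned by an anisotropic vector `v` of the form `h` with Gram matrix `j`. If the entries of `v` are
fixed by `σ`, then `σ` fixes `P`, so `x * σ x = 1` reduces to `a * σ a = 1`, and `x ∈ G^j` reduces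
to `a * τ a = 1` because `P` is self-adjoint. If no such `v` existed, polarization would give
`c * h u v + τ c * h v u = 0` on the `σ`-fixed vectors, both for `c = 1` and for a `σ`-fixed `c`
moved by `τ`; this would force `j = 0`.
-/

section FixedElements

-- Each `x` is a root of `(X - x) (X - σ x)`, whose coefficients are fixed by `σ`.
theorem apply_eq_or_eq_of_fixed {R : Type*} [CommRing R] [NoZeroDivisors R] {σ τ : R →+* R}
    (hσ : Function.Involutive σ) (h : ∀ c, σ c = c → τ c = c) (x : R) : τ x = x ∨ τ x = σ x := by
  have trace_fixed : τ (x + σ x) = x + σ x := h _ (by rw [map_add, hσ, add_comm])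
  have norm_fixed : τ (x * σ x) = x * σ x := h _ (by rw [map_mul, hσ, mul_comm])
  rw [map_add] at trace_fixed
  rw [map_mul] at norm_fixed
  have : (τ x - x) * (τ x - σ x) = 0 := by linear_combination τ x * trace_fixed - norm_fixed
  simpa only [mul_eq_zero, sub_eq_zero] using this

theorem exists_fixed_and_apply_ne {R : Type*} [CommRing R] [NoZeroDivisors R] {σ τ : R →+* R}
    (hσ : Function.Involutive σ) (hτ1 : τ ≠ RingHom.id R) (hστ : τ ≠ σ) :
    ∃ c, σ c = c ∧ τ c ≠ c := by
  by_contra! h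
  -- A group is not the union of two proper subgroups.
  have hcover : ((⊤ : Subring R) : Set R) ⊆ τ.eqLocus (RingHom.id R) ∪ τ.eqLocus σ :=
    fun x _ => apply_eq_or_eq_of_fixed hσ h x
  rcases AddSubgroupClass.subset_union.mp hcover with hle_id | hle_σ
  · exact hτ1 (RingHom.ext fun x => hle_id (Subring.mem_top x))
  · exact hστ (RingHom.ext fun x => hle_σ (Subring.mem_top x))

end FixedElements

section SesquilinearForms

theorem map_smul_vecMulVec {m n R S : Type*} [Semiring R] [Semiring S] (f : R →+* S) (a : R)
    (v : m → R) (w : n → R) : (a • vecMulVec v w).map f = f a • vecMulVec (f ∘ v) (f ∘ w) := by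
  ext
  simp [vecMulVec_apply]

variable {ι R : Type*} [Fintype ι] [CommSemiring R]

theorem comp_vecMul_of_commute {σ τ : R →+* R} (hστ : Function.Commute σ τ) (j : Matrix ι ι R)
    (v : ι → R) : σ ∘ ((τ ∘ v) ᵥ* j) = (τ ∘ σ ∘ v) ᵥ* j.map σ := by
  rw [← Function.comp_assoc τ, ← hστ.comp_eq]
  exact funext fun i => RingHom.map_vecMul σ j _ i

theorem comp_vecMul_of_hermitian {τ : R →+* R} (hτ : Function.Involutive τ) {ε : R}
    {j : Matrix ι ι R} (hj : (j.map τ)ᵀ = ε • j) (v : ι → R) :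
    τ ∘ ((τ ∘ v) ᵥ* j) = ε • j *ᵥ v :=
  calc τ ∘ ((τ ∘ v) ᵥ* j) = (τ ∘ τ ∘ v) ᵥ* j.map τ := funext fun i => RingHom.map_vecMul τ j _ i
    _ = (j.map τ)ᵀ *ᵥ v := by
      rw [mulVec_transpose, ← Function.comp_assoc, hτ.comp_self, Function.id_comp]
    _ = ε • j *ᵥ v := by rw [hj, smul_mulVec]

variable [DecidableEq ι]

/-- The sesquilinear form `(u, v) ↦ τ(u)ᵀ j v` with Gram matrix `j`, semilinear in the first
variable. -/
def sesqForm (τ : R →+* R) (j : Matrix ι ι R) : (ι → R) →ₛₗ[τ] (ι → R) →ₗ[R] R :=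
  Matrix.toLinearMapₛₗ₂' R τ (RingHom.id R) j

theorem sesqForm_apply (τ : R →+* R) (j : Matrix ι ι R) (u v : ι → R) :
    sesqForm τ j u v = (τ ∘ u) ᵥ* j ⬝ᵥ v := by
  rw [← dotProduct_mulVec, sesqForm, Matrix.toLinearMapₛₗ₂'_apply]
  simp only [dotProduct, mulVec, Finset.mul_sum, smul_eq_mul, RingHom.id_apply,
    Function.comp_apply, mul_comm (j _ _)]

theorem sesqForm_single_single (τ : R →+* R) (j : Matrix ι ι R) (i k : ι) :
    sesqForm τ j (Pi.single i 1) (Pi.single k 1) = j i k :=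
  Matrix.toLinearMapₛₗ₂'_single τ (RingHom.id R) j i k

theorem sesqForm_map {σ τ : R →+* R} (hστ : Function.Commute σ τ) (j : Matrix ι ι R)
    (u v : ι → R) : σ (sesqForm τ j u v) = sesqForm τ (j.map σ) (σ ∘ u) (σ ∘ v) := by
  rw [sesqForm_apply, RingHom.map_dotProduct, comp_vecMul_of_commute hστ, sesqForm_apply]

theorem sesqForm_self_of_hermitian {τ : R →+* R} (hτ : Function.Involutive τ) {ε : R}
    {j : Matrix ι ι R} (hj : (j.map τ)ᵀ = ε • j) (v : ι → R) :
    τ (sesqForm τ j v v) = ε * sesqForm τ j v v := by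
  rw [sesqForm_apply, RingHom.map_dotProduct, comp_vecMul_of_hermitian hτ hj, smul_dotProduct,
    smul_eq_mul, dotProduct_comm, dotProduct_mulVec]

theorem sesquilinear_apply_eq_zero_of_isotropic {R M : Type*} [CommRing R] [NoZeroDivisors R]
    [AddCommMonoid M] [Module R M] {τ : R →+* R} {B : M →ₛₗ[τ] M →ₗ[R] R} {N : AddSubmonoid M}
    {c : R} (hc : τ c ≠ c) (hcN : ∀ v ∈ N, c • v ∈ N) (hB : ∀ v ∈ N, B v v = 0)
    {u v : M} (hu : u ∈ N) (hv : v ∈ N) : B u v = 0 := by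
  have polarization : ∀ w ∈ N, B u w + B w u = 0 := fun w hw => by
    simpa [hB u hu, hB w hw] using hB (u + w) (add_mem hu hw)
  have skew := polarization v hv
  have twisted_skew : c * B u v + τ c * B v u = 0 := by simpa using polarization (c • v) (hcN v hv)
  have : (τ c - c) * B u v = 0 := by linear_combination τ c * skew - twisted_skew
  exact (mul_eq_zero.mp this).resolve_left (sub_ne_zero.mpr hc)

theorem exists_sesqForm_self_ne_zero {ι R : Type*} [Fintype ι] [DecidableEq ι] [CommRing R]
    [NoZeroDivisors R] {τ : R →+* R} {S : Subring R} {c : R} (hcS : c ∈ S)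
    (hc : τ c ≠ c) {j : Matrix ι ι R} (hj : j ≠ 0) :
    ∃ v : ι → R, (∀ i, v i ∈ S) ∧ sesqForm τ j v v ≠ 0 := by
  by_contra! hiso
  let N : AddSubmonoid (ι → R) := AddSubmonoid.pi Set.univ fun _ => S.toAddSubmonoid
  have single_mem (i : ι) : Pi.single i 1 ∈ N := fun k _ => by
    rw [Pi.single_apply]
    split_ifs
    exacts [S.one_mem, S.zero_mem]
  refine hj (Matrix.ext fun i k => ?_)
  rw [← sesqForm_single_single τ j]
  exact sesquilinear_apply_eq_zero_of_isotropic (N := N) hc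
    (fun v hv i hi => S.mul_mem hcS (hv i hi)) (fun v hv => hiso v fun i => hv i trivial)
    (single_mem i) (single_mem k)

end SesquilinearForms

section OrthogonalProjections

variable {ι K : Type*} [Fintype ι] [DecidableEq ι] [Field K]

/-- The projection `x ↦ (h(v, x) / h(v, v)) v` onto the line spanned by `v` along its orthogonal
complement for the form `h = sesqForm τ j`. It is the zero matrix when `h(v, v) = 0`. -/
def orthProj (τ : K →+* K) (j : Matrix ι ι K) (v : ι → K) : Matrix ι ι K :=
  (sesqForm τ j v v)⁻¹ • vecMulVec v ((τ ∘ v) ᵥ* j)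

theorem orthProj_map {σ τ : K →+* K} (hστ : Function.Commute σ τ) (j : Matrix ι ι K) (v : ι → K) :
    (orthProj τ j v).map σ = orthProj τ (j.map σ) (σ ∘ v) := by
  rw [orthProj, orthProj, map_smul_vecMulVec, map_inv₀, sesqForm_map hστ,
    comp_vecMul_of_commute hστ]

theorem isIdempotentElem_orthProj (τ : K →+* K) (j : Matrix ι ι K) (v : ι → K) :
    IsIdempotentElem (orthProj τ j v) := by
  rw [IsIdempotentElem, orthProj, smul_mul_smul_comm, vecMulVec_mul_vecMulVec, ← sesqForm_apply,
    vecMulVec_smul, smul_smul, mul_assoc]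
  congr 1
  by_cases hv : sesqForm τ j v v = 0
  · simp [hv]
  · rw [inv_mul_cancel₀ hv, mul_one]

theorem semiconjBy_orthProj {τ : K →+* K} (hτ : Function.Involutive τ) {ε : K}
    {j : Matrix ι ι K} (hj : (j.map τ)ᵀ = ε • j) {v : ι → K} (hv : sesqForm τ j v v ≠ 0) :
    SemiconjBy j (orthProj τ j v) ((orthProj τ j v).map τ)ᵀ := by
  have hτv : τ (sesqForm τ j v v) = ε * sesqForm τ j v v := sesqForm_self_of_hermitian hτ hj v
  have hε : ε ≠ 0 := left_ne_zero_of_mul (hτv ▸ (map_ne_zero τ).mpr hv)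
  have htranspose : ((orthProj τ j v).map τ)ᵀ =
      (sesqForm τ j v v)⁻¹ • vecMulVec (j *ᵥ v) (τ ∘ v) := by
    rw [orthProj, map_smul_vecMulVec, map_inv₀, hτv, comp_vecMul_of_hermitian hτ hj,
      transpose_smul, transpose_vecMulVec, smul_vecMulVec, smul_smul, mul_comm ε, mul_inv,
      mul_assoc, inv_mul_cancel₀ hε, mul_one]
  rw [SemiconjBy, htranspose, orthProj, Matrix.mul_smul, Matrix.smul_mul, mul_vecMulVec,
    vecMulVec_mul]

end OrthogonalProjections

section Dilations

variable {R A : Type*} [CommRing R] [Ring A] [Algebra R A]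

/-- The dilation with ratio `a` along an idempotent `p`: it acts as `a` on the range of `p` and as
the identity on its kernel. -/
def dilation (a : R) (p : A) : A :=
  1 + (a - 1) • p

theorem dilation_mul_dilation {p : A} (hp : IsIdempotentElem p) (a b : R) :
    dilation a p * dilation b p = dilation (a * b) p := by
  simp only [dilation, add_mul, mul_add, one_mul, mul_one, smul_mul_smul_comm, hp.eq]
  module

theorem dilation_one (p : A) : dilation (1 : R) p = 1 := by
  simp [dilation]

theorem semiconjBy_dilation {j p q : A} (h : SemiconjBy j p q) (a : R) :
    SemiconjBy j (dilation a p) (dilation a q) :=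
  (SemiconjBy.one_right j).add_right (h.smul_right _)

variable {ι : Type*} [DecidableEq ι] [Fintype ι]

theorem dilation_map {S : Type*} [CommRing S] (f : R →+* S) (a : R) (P : Matrix ι ι R) :
    (dilation a P).map f = dilation (f a) (P.map f) := by
  simp [dilation, Matrix.map_add, Matrix.map_smul']

theorem dilation_transpose (a : R) (P : Matrix ι ι R) : (dilation a P)ᵀ = dilation a Pᵀ := by
  simp [dilation]

theorem det_dilation_orthProj {K : Type*} [Field K] {τ : K →+* K} {j : Matrix ι ι K} {v : ι → K}
    (hv : sesqForm τ j v v ≠ 0) (a : K) : (dilation a (orthProj τ j v)).det = a := by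
  rw [dilation, orthProj, smul_smul, ← smul_vecMulVec, vecMulVec_eq Unit,
    det_one_add_replicateCol_mul_replicateRow, dotProduct_smul, ← sesqForm_apply, smul_eq_mul,
    inv_mul_cancel_right₀ hv, add_sub_cancel]

theorem Xj_dilation {K : Type} [Field K] {n : ℕ} {σ τ : K →+* K} {j P : Matrix (Fin n) (Fin n) K}
    (hP : IsIdempotentElem P) (hPσ : P.map σ = P) (hPτ : SemiconjBy j P (P.map τ)ᵀ)
    {a : K} (haτ : a * τ a = 1) (haσ : a * σ a = 1) : Xj σ τ j (dilation a P) := by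
  have mul_map_eq_one : dilation a P * (dilation a P).map σ = 1 := by
    rw [dilation_map, hPσ, dilation_mul_dilation hP, haσ, dilation_one]
  refine ⟨⟨IsUnit.of_mul_eq_one _ mul_map_eq_one, ?_⟩, mul_map_eq_one⟩
  calc ((dilation a P).map τ)ᵀ * j * dilation a P
      = j * dilation (τ a) P * dilation a P := by
        rw [dilation_map, dilation_transpose, (semiconjBy_dilation hPτ (τ a)).eq]
    _ = j := by
        rw [mul_assoc, dilation_mul_dilation hP, mul_comm, haτ, dilation_one, mul_one]

end Dilations

theorem stmt_8_general {K : Type} [Field K] {σ τ : K →+* K}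
    (hσ2 : Function.Involutive σ) (hτ2 : Function.Involutive τ) (hcomm : Function.Commute σ τ)
    (hτ1 : τ ≠ RingHom.id K) (hστ : τ ≠ σ) {ε : K} {n : ℕ} (hn : 1 ≤ n)
    {j : Matrix (Fin n) (Fin n) K} (hj : inYnF σ τ ε j)
    {a : K} (ha₁ : a * τ a = 1) (ha₂ : a * σ a = 1) :
    ∃ x, Xj σ τ j x ∧ x.det = a := by
  obtain ⟨hj_unit, hjσ, hjτ⟩ := hj
  have : NeZero n := ⟨Nat.one_le_iff_ne_zero.mp hn⟩
  obtain ⟨c, hcσ, hcτ⟩ := exists_fixed_and_apply_ne hσ2 hτ1 hστ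
  obtain ⟨v, hvσ, hv⟩ := exists_sesqForm_self_ne_zero (S := σ.eqLocus (RingHom.id K)) hcσ hcτ
    hj_unit.ne_zero
  have proj_fixed : (orthProj τ j v).map σ = orthProj τ j v := by
    rw [orthProj_map hcomm, show j.map σ = j from Matrix.ext hjσ, show σ ∘ v = v from funext hvσ]
  exact ⟨dilation a (orthProj τ j v),
    Xj_dilation (isIdempotentElem_orthProj τ j v) proj_fixed (semiconjBy_orthProj hτ2 hjτ hv)
      ha₁ ha₂,
    det_dilation_orthProj hv a⟩

/-- In the unitary case, for every
`a ∈ (E'/E)₁ ∩ (E'/F')₁ = {a : a·τ(a) = 1 ∧ a·σ(a) = 1}` there exists `x ∈ X^j` with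
`det x = a`. -/
theorem stmt_8 (p : ℕ) [Fact p.Prime]
    (E' : Type) [Field E'] [Algebra ℚ_[p] E'] [FiniteDimensional ℚ_[p] E']
    (σ τ : E' ≃ₐ[ℚ_[p]] E')
    (hσ2 : σ * σ = 1) (hτ2 : τ * τ = 1) (hcomm : σ * τ = τ * σ)
    (hσ1 : σ ≠ 1) (hτ1 : τ ≠ 1) (hστ : σ ≠ τ)
    (ε : E') (hε : ε = 1 ∨ ε = -1)
    (n : ℕ) (hn : 1 ≤ n)
    (j : Matrix (Fin n) (Fin n) E')
    (hj : inYnF ⇑σ ⇑τ ε j)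
    (a : E') (ha₁ : a * τ a = 1) (ha₂ : a * σ a = 1) :
    ∃ x, Xj ⇑σ ⇑τ j x ∧ x.det = a :=
  stmt_8_general (σ := (σ : E' →+* E')) (τ := (τ : E' →+* E')) (DFunLike.congr_fun hσ2)
    (DFunLike.congr_fun hτ2) (DFunLike.congr_fun hcomm)
    (fun h => hτ1 (AlgEquiv.ext fun x => DFunLike.congr_fun h x))
    (fun h => hστ (AlgEquiv.ext fun x => (DFunLike.congr_fun h x).symm)) hn hj ha₁ ha₂
end

section
/- In the orthogonal case, the orbit correspondence sending G^j(E)·x to (transpose(z)·j·z) ⋆ GL_n(F), where z ∈ GL_n(E) is any element with x = z·σ(z)^{-1}, restricts to: (i) a bijection between the SG^j(E)-orbits in SX^j and the GL_n(F)-orbits in (j ⋆ GL_n^F(E)) ∩ Y_n(F); and (ii) a bijection between the SG^j(E)-orbits in X^j \ SX^j and the GL_n(F)-orbits in (j ⋆ GL_n^{ıF}(E)) ∩ Y_n(F). Here GL_n^F(E) (resp. GL_n^{ıF}(E)) denotes the set of g ∈ GL_n(E) with det g ∈ F^× (resp. det g ∈ ı·F^×). -/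
open Matrix

namespace OrthPair

variable {E : Type} [Field E]

/-- `g ∈ G^j(E) = {g ∈ GL_n(E) : gᵀ j g = j}` (orthogonal case). -/
def Gj {n : ℕ} (j g : Matrix (Fin n) (Fin n) E) : Prop :=
  IsUnit g ∧ gᵀ * j * g = j

/-- `x ∈ X^j = {x ∈ G^j(E) : x·σ(x) = 1}`. -/
def Xj {n : ℕ} (σ : E → E) (j x : Matrix (Fin n) (Fin n) E) : Prop :=
  Gj j x ∧ x * x.map σ = 1

/-- `x ∈ SX^j = X^j ∩ SL_n(E)`. -/
def SXj {n : ℕ} (σ : E → E) (j x : Matrix (Fin n) (Fin n) E) : Prop :=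
  Xj σ j x ∧ x.det = 1

/-- `x'` lies in the `SG^j(E) = G^j(E) ∩ SL_n(E)`-orbit of `x` for twisted conjugation. -/
def orbSG {n : ℕ} (σ : E → E) (j x x' : Matrix (Fin n) (Fin n) E) : Prop :=
  ∃ g, Gj j g ∧ g.det = 1 ∧ x' = g * x * (g.map σ)⁻¹

/-- `y'` lies in the `GL_n(F)`-orbit of `y`, `F` being the fixed field of `σ`. -/
def orbYF {n : ℕ} (σ : E → E) (y y' : Matrix (Fin n) (Fin n) E) : Prop :=
  ∃ g, (IsUnit g ∧ ∀ a b, σ (g a b) = g a b) ∧ y' = gᵀ * y * g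

end OrthPair

open OrthPair

/-
Write `c(z) = z σ(z)⁻¹`. Then `c(g z) = g c(z) σ(g)⁻¹`, and `c(z h) = c(z)` exactly when `h`
has entries in `F`, so that a relation `g z h = z'` trades a twisted conjugation by `g` for
a change of variables by `h`; moreover `g` preserves `j` iff `z'ᵀ j z' = hᵀ (zᵀ j z) h`.
Together with Hilbert 90 this matches `G^j(E)`-orbits with `GL_n(F)`-orbits. To pass to
`SG^j(E)`-orbits, note that a `g` of determinant `-1` can be corrected by replacing `h` with
`r h`, where `r` is a reflection over `F` for the form `zᵀ j z`. Since `det c(z) = det z /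
σ(det z)`, the sign of `det c(z)` tells whether `det z` lies in `F` or in `ι F`.
-/

namespace OrthPair

section Reflection

variable {K m : Type*} [Field K] [Fintype m] {y : Matrix m m K} {v : m → K}

theorem exists_dotProduct_mulVec_self_ne_zero (h2 : (2 : K) ≠ 0) (hy : y.IsSymm) (hy0 : y ≠ 0) :
    ∃ v, v ⬝ᵥ y *ᵥ v ≠ 0 := by
  classical
  have : Invertible (2 : K) := invertibleOfNonzero h2
  obtain ⟨v, hv⟩ := LinearMap.BilinForm.exists_bilinForm_self_ne_zero
    ((map_ne_zero_iff _ (toBilin' (R₁ := K) (n := m)).injective).2 hy0)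
    (LinearMap.BilinForm.isSymm_iff.1 (isSymm_toBilin'_iff_isSymm.2 hy))
  exact ⟨v, by rwa [toBilin'_apply'] at hv⟩

variable [DecidableEq m]

/-- The matrix of the orthogonal reflection `u ↦ u - 2 (v, u) / (v, v) • v` in the hyperplane
orthogonal to `v`, where `(v, u) = vᵀ y u`; it is meaningful only if `v` is anisotropic. -/
def reflection (y : Matrix m m K) (v : m → K) : Matrix m m K :=
  1 - (2 / (v ⬝ᵥ y *ᵥ v)) • vecMulVec v (y *ᵥ v)

theorem reflection_mul_self (hv : v ⬝ᵥ y *ᵥ v ≠ 0) : reflection y v * reflection y v = 1 := by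
  have hsq : vecMulVec v (y *ᵥ v) * vecMulVec v (y *ᵥ v) =
      (v ⬝ᵥ y *ᵥ v) • vecMulVec v (y *ᵥ v) := by
    rw [vecMulVec_mul_vecMulVec, vecMulVec_smul, dotProduct_comm]
  have hcoeff : ∀ q : K, q ≠ 0 → 2 / q * (2 / q) * q = 2 / q + 2 / q := fun q hq => by
    field_simp
    norm_num
  simp only [reflection, sub_mul, mul_sub, one_mul, mul_one, smul_mul_smul_comm, hsq, smul_smul,
    hcoeff _ hv, add_smul]
  abel

theorem transpose_reflection_mul (hy : y.IsSymm) : (reflection y v)ᵀ * y = y * reflection y v := by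
  have hvy : v ᵥ* y = y *ᵥ v := by rw [← mulVec_transpose, hy]
  simp only [reflection, transpose_sub, transpose_one, transpose_smul, transpose_vecMulVec, sub_mul,
    mul_sub, one_mul, mul_one, Matrix.smul_mul, Matrix.mul_smul, vecMulVec_mul,
    mul_vecMulVec, hvy]

theorem det_reflection (hv : v ⬝ᵥ y *ᵥ v ≠ 0) : (reflection y v).det = -1 := by
  rw [reflection, sub_eq_add_neg, ← neg_smul, ← smul_vecMulVec, vecMulVec_eq Unit,
    det_one_add_replicateCol_mul_replicateRow, dotProduct_smul, dotProduct_comm (y *ᵥ v),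
    smul_eq_mul, neg_mul, div_mul_cancel₀ _ hv]
  norm_num

theorem exists_isometry_det_eq_neg_one (h2 : (2 : K) ≠ 0) (hy : y.IsSymm) (hy0 : y ≠ 0) :
    ∃ r : Matrix m m K, rᵀ * y * r = y ∧ r.det = -1 := by
  obtain ⟨v, hv⟩ := exists_dotProduct_mulVec_self_ne_zero h2 hy hy0
  refine ⟨reflection y v, ?_, det_reflection hv⟩
  rw [transpose_reflection_mul hy, Matrix.mul_assoc, reflection_mul_self hv, Matrix.mul_one]

theorem exists_map_eq_self_isometry_det_eq_neg_one {σ : K →+* K} (h2 : (2 : K) ≠ 0)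
    (hy : y.IsSymm) (hy0 : y ≠ 0) (hσy : y.map σ = y) :
    ∃ r : Matrix m m K, r.map σ = r ∧ rᵀ * y * r = y ∧ r.det = -1 := by
  let F : Subfield K := σ.eqLocusField (RingHom.id K)
  let y₀ : Matrix m m F := of fun a b => ⟨y a b, congrFun₂ hσy a b⟩
  have hy₀ : y₀.map F.subtype = y := rfl
  have h2F : (2 : F) ≠ 0 := fun h => h2 (congrArg F.subtype h)
  have hy₀s : y₀.IsSymm := IsSymm.ext fun a b => Subtype.ext (hy.apply a b)
  have hy₀0 : y₀ ≠ 0 := fun h => hy0 (by rw [← hy₀, h, Matrix.map_zero _ (map_zero _)])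
  obtain ⟨r, hr, hdet⟩ := exists_isometry_det_eq_neg_one h2F hy₀s hy₀0
  refine ⟨r.map F.subtype, Matrix.ext fun a b => (r a b).2, ?_, ?_⟩
  · rw [← hy₀, ← transpose_map, ← Matrix.map_mul, ← Matrix.map_mul, hr]
  · rw [← RingHom.mapMatrix_apply, ← RingHom.map_det, hdet, map_neg, map_one]

theorem exists_fixed_transpose_mul_mul_eq_det_eq_neg {σ : K →+* K} {y' h : Matrix m m K}
    (h2 : (2 : K) ≠ 0) (hy : y.IsSymm) (hy0 : y ≠ 0) (hσy : y.map σ = y) (hh : IsUnit h)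
    (hσh : h.map σ = h) (hyy' : y' = hᵀ * y * h) :
    ∃ h' : Matrix m m K, IsUnit h' ∧ h'.map σ = h' ∧ y' = h'ᵀ * y * h' ∧ h'.det = -h.det := by
  obtain ⟨r, hσr, hr, hdet⟩ := exists_map_eq_self_isometry_det_eq_neg_one h2 hy hy0 hσy
  have hrU : IsUnit r := (isUnit_iff_isUnit_det r).2 (hdet ▸ isUnit_one.neg)
  refine ⟨r * h, hrU.mul hh, by rw [Matrix.map_mul, hσr, hσh], ?_, ?_⟩
  · rw [hyy']
    conv_lhs => rw [← hr]
    simp only [transpose_mul, Matrix.mul_assoc]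
  · rw [det_mul, hdet, neg_one_mul]

end Reflection

section Coboundary

variable {R m : Type*} [CommRing R] [Fintype m] [DecidableEq m] {σ : R →+* R}
  {z h : Matrix m m R}

/-- The twisted coboundary `z σ(z)⁻¹` of `z`, which parametrises the solutions of `x σ(x) = 1`. -/
noncomputable def coboundary (σ : R →+* R) (z : Matrix m m R) : Matrix m m R :=
  z * (z.map σ)⁻¹

theorem isUnit_map (σ : R →+* R) (hz : IsUnit z) : IsUnit (z.map σ) :=
  hz.map σ.mapMatrix

theorem coboundary_mul_map (hz : IsUnit z) : coboundary σ z * z.map σ = z :=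
  nonsing_inv_mul_cancel_right _ _ ((isUnit_iff_isUnit_det _).1 (isUnit_map σ hz))

theorem eq_coboundary_iff {x : Matrix m m R} (hz : IsUnit z) :
    x = coboundary σ z ↔ x * z.map σ = z := by
  rw [← (isUnit_map σ hz).mul_left_inj, coboundary_mul_map hz]

theorem isUnit_coboundary (hz : IsUnit z) : IsUnit (coboundary σ z) :=
  hz.mul (isUnit_nonsing_inv_iff.2 (isUnit_map σ hz))

theorem coboundary_mul_map_coboundary (hσ : Function.Involutive σ) (hz : IsUnit z) :
    coboundary σ z * (coboundary σ z).map σ = 1 := by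
  have hmap : (coboundary σ z).map σ * z = z.map σ := by
    have hzσ : (z.map σ).map σ = z := Matrix.map_involutive hσ z
    conv_lhs => rw [← hzσ, ← Matrix.map_mul, hzσ, coboundary_mul_map hz]
  rw [← hz.mul_left_inj, Matrix.mul_assoc, hmap, coboundary_mul_map hz, one_mul]

theorem coboundary_mul_left (g z : Matrix m m R) :
    coboundary σ (g * z) = g * coboundary σ z * (g.map σ)⁻¹ := by
  simp only [coboundary, Matrix.map_mul, Matrix.mul_inv_rev, Matrix.mul_assoc]

theorem coboundary_mul_right_eq_iff (hz : IsUnit z) (hh : IsUnit h) :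
    coboundary σ (z * h) = coboundary σ z ↔ h.map σ = h := by
  rw [eq_comm, eq_coboundary_iff (hz.mul hh), Matrix.map_mul, ← Matrix.mul_assoc,
    coboundary_mul_map hz, hz.mul_right_inj]

theorem transpose_mul_mul_inj {a b : Matrix m m R} (hz : IsUnit z) :
    zᵀ * a * z = zᵀ * b * z ↔ a = b := by
  rw [hz.mul_left_inj, ((isUnit_transpose z).2 hz).mul_right_inj]

theorem isometry_coboundary_iff {j : Matrix m m R} (hj : j.map σ = j) (hz : IsUnit z) :
    (coboundary σ z)ᵀ * j * coboundary σ z = j ↔ (zᵀ * j * z).map σ = zᵀ * j * z := by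
  have hright : (z.map σ)ᵀ * ((coboundary σ z)ᵀ * j * coboundary σ z) * z.map σ = zᵀ * j * z := by
    conv_rhs => rw [← coboundary_mul_map (σ := σ) hz]
    simp only [transpose_mul, Matrix.mul_assoc]
  have hleft : (zᵀ * j * z).map σ = (z.map σ)ᵀ * j * z.map σ := by
    rw [Matrix.map_mul, Matrix.map_mul, hj, transpose_map]
  have hσz : IsUnit (z.map σ) := isUnit_map σ hz
  rw [← transpose_mul_mul_inj hσz, hright, hleft, eq_comm]

end Coboundary

section HilbertNinety

variable {K m : Type*} [Field K] [Fintype m] [DecidableEq m] {σ : K →+* K} {x : Matrix m m K}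

theorem exists_isUnit_col_mem_of_span_eq_top {s : Set (m → K)} (hs : Submodule.span K s = ⊤) :
    ∃ z : Matrix m m K, IsUnit z ∧ ∀ i, z.col i ∈ s := by
  let b := Module.Basis.ofSpan hs.ge
  let e := b.indexEquiv (Pi.basisFun K m)
  refine ⟨(of fun i => b (e.symm i))ᵀ, ?_, fun i => ?_⟩
  · exact linearIndependent_cols_iff_isUnit.1 (b.linearIndependent.comp _ e.symm.injective)
  · exact Module.Basis.ofSpan_subset hs.ge (Set.mem_range_self (e.symm i))

theorem mulVec_map_mulVec_map (hσ : Function.Involutive σ) (hx : x * x.map σ = 1) (v : m → K) :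
    x *ᵥ (σ ∘ (x *ᵥ (σ ∘ v))) = v := by
  have hmap : σ ∘ (x *ᵥ (σ ∘ v)) = x.map σ *ᵥ v := by
    funext i
    rw [Function.comp_apply, RingHom.map_mulVec, ← Function.comp_assoc, hσ.comp_self,
      Function.id_comp]
  rw [hmap, mulVec_mulVec, hx, one_mulVec]

/- Both `v + x σ(v)` and `a v + x σ(a v)` are fixed by the semilinear involution `v ↦ x σ(v)`, and
`v` is a linear combination of the two because `σ a ≠ a`. -/
theorem span_mulVec_map_eq_self (hσ : Function.Involutive σ) {a : K} (ha : σ a ≠ a)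
    (hx : x * x.map σ = 1) : Submodule.span K {v : m → K | x *ᵥ (σ ∘ v) = v} = ⊤ := by
  refine Submodule.eq_top_iff'.2 fun v => ?_
  have hfixed (u : m → K) : u + x *ᵥ (σ ∘ u) ∈ {v : m → K | x *ᵥ (σ ∘ v) = v} := by
    have hadd : σ ∘ (u + x *ᵥ (σ ∘ u)) = σ ∘ u + σ ∘ (x *ᵥ (σ ∘ u)) :=
      funext fun i => map_add σ _ _
    rw [Set.mem_ofPred_eq, hadd, mulVec_add, mulVec_map_mulVec_map hσ hx, add_comm]
  have hsmul : σ ∘ (a • v) = σ a • (σ ∘ v) := funext fun i => map_mul σ _ _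
  have hcomb : (a • v + x *ᵥ (σ ∘ (a • v))) - σ a • (v + x *ᵥ (σ ∘ v)) = (a - σ a) • v := by
    rw [hsmul, mulVec_smul]
    module
  rw [← Submodule.smul_mem_iff _ (sub_ne_zero.2 ha.symm), ← hcomb]
  exact sub_mem (Submodule.subset_span (hfixed _))
    (Submodule.smul_mem _ _ (Submodule.subset_span (hfixed v)))

theorem exists_isUnit_eq_coboundary (hσ : Function.Involutive σ) {a : K} (ha : σ a ≠ a)
    (hx : x * x.map σ = 1) : ∃ z, IsUnit z ∧ x = coboundary σ z := by
  obtain ⟨z, hz, hcol⟩ := exists_isUnit_col_mem_of_span_eq_top (span_mulVec_map_eq_self hσ ha hx)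
  exact ⟨z, hz, (eq_coboundary_iff hz).2 <| ext_col fun i => hcol i⟩

end HilbertNinety

section Determinant

variable {K m : Type*} [Field K] [Fintype m] [DecidableEq m] {σ : K →+* K} {z : Matrix m m K}

theorem det_coboundary (σ : K →+* K) (z : Matrix m m K) :
    (coboundary σ z).det = z.det / σ z.det := by
  rw [coboundary, det_mul, det_nonsing_inv, Ring.inverse_eq_inv', div_eq_mul_inv,
    RingHom.map_det, RingHom.mapMatrix_apply]

theorem map_det_ne_zero (σ : K →+* K) (hz : IsUnit z) : σ z.det ≠ 0 :=
  (map_ne_zero σ).2 ((isUnit_iff_isUnit_det z).1 hz).ne_zero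

theorem det_coboundary_eq_one_iff (hz : IsUnit z) :
    (coboundary σ z).det = 1 ↔ σ z.det = z.det := by
  rw [det_coboundary, div_eq_one_iff_eq (map_det_ne_zero σ hz), eq_comm]

theorem det_coboundary_eq_neg_one_iff (hz : IsUnit z) :
    (coboundary σ z).det = -1 ↔ σ z.det = -z.det := by
  rw [det_coboundary, div_eq_iff (map_det_ne_zero σ hz), neg_one_mul, eq_neg_iff_add_eq_zero,
    eq_neg_iff_add_eq_zero, add_comm]

theorem exists_fixed_eq_mul_iff {ι d : K} (hι : σ ι = -ι) (hι0 : ι ≠ 0) (hd : d ≠ 0) :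
    (∃ c, σ c = c ∧ c ≠ 0 ∧ d = ι * c) ↔ σ d = -d := by
  constructor
  · rintro ⟨c, hc, -, rfl⟩
    rw [map_mul, hc, hι, neg_mul]
  · intro hσd
    refine ⟨d / ι, ?_, div_ne_zero hd hι0, (mul_div_cancel₀ d hι0).symm⟩
    rw [map_div₀, hσd, hι, neg_div_neg_eq]

end Determinant

section Orbits

variable {E : Type} [Field E] {n : ℕ} {σ : E →+* E} {j z z' : Matrix (Fin n) (Fin n) E}

theorem Gj.det_eq_one_or_eq_neg_one {g : Matrix (Fin n) (Fin n) E} (hj : IsUnit j) (hg : Gj j g) :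
    g.det = 1 ∨ g.det = -1 := by
  have hdet : g.det * j.det * g.det = j.det := by
    simpa only [det_mul, det_transpose] using congrArg det hg.2
  refine mul_self_eq_one_iff.1 (mul_right_cancel₀ ((isUnit_iff_isUnit_det j).1 hj).ne_zero ?_)
  linear_combination hdet

theorem Xj_coboundary_iff (hσ : Function.Involutive σ) (hj : j.map σ = j) (hz : IsUnit z) :
    Xj σ j (coboundary σ z) ↔ ∀ a b, σ ((zᵀ * j * z) a b) = (zᵀ * j * z) a b := by
  rw [Xj, Gj, isometry_coboundary_iff hj hz, ← Matrix.ext_iff]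
  exact ⟨fun h => h.1.2, fun h => ⟨⟨isUnit_coboundary hz, h⟩, coboundary_mul_map_coboundary hσ hz⟩⟩

theorem Xj.det_coboundary_ne_one_iff {ι : E} (h2 : (2 : E) ≠ 0) (hι : σ ι = -ι) (hι0 : ι ≠ 0)
    (hj : IsUnit j) (hz : IsUnit z) (hx : Xj σ j (coboundary σ z)) :
    (coboundary σ z).det ≠ 1 ↔ ∃ c, σ c = c ∧ c ≠ 0 ∧ z.det = ι * c := by
  have hne : (-1 : E) ≠ 1 := fun h => h2 (by linear_combination -h)
  rw [exists_fixed_eq_mul_iff hι hι0 ((isUnit_iff_isUnit_det z).1 hz).ne_zero,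
    ← det_coboundary_eq_neg_one_iff hz]
  exact ⟨(hx.1.det_eq_one_or_eq_neg_one hj).resolve_left, fun h => h ▸ hne⟩

theorem exists_Gj_of_transpose_mul_mul_eq {h : Matrix (Fin n) (Fin n) E} (hz : IsUnit z)
    (hz' : IsUnit z') (hh : IsUnit h) (hσh : h.map σ = h)
    (hy : z'ᵀ * j * z' = hᵀ * (zᵀ * j * z) * h) :
    ∃ g, Gj j g ∧ g * (z * h) = z' ∧ coboundary σ z' = g * coboundary σ z * (g.map σ)⁻¹ := by
  have hzh : IsUnit (z * h) := hz.mul hh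
  obtain ⟨g, rfl⟩ : ∃ g, g * (z * h) = z' :=
    ⟨z' * (z * h)⁻¹, nonsing_inv_mul_cancel_right _ _ ((isUnit_iff_isUnit_det _).1 hzh)⟩
  have hisom : gᵀ * j * g = j := by
    rw [← transpose_mul_mul_inj hzh]
    simpa only [transpose_mul, Matrix.mul_assoc] using hy
  refine ⟨g, ⟨isUnit_of_mul_isUnit_left hz', hisom⟩, rfl, ?_⟩
  rw [coboundary_mul_left, (coboundary_mul_right_eq_iff hz hh).2 hσh]

theorem orbYF_of_coboundary_eq {g : Matrix (Fin n) (Fin n) E} (hz : IsUnit z) (hz' : IsUnit z')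
    (hg : Gj j g) (hx : coboundary σ z' = g * coboundary σ z * (g.map σ)⁻¹) :
    orbYF σ (zᵀ * j * z) (z'ᵀ * j * z') := by
  have hgz : IsUnit (g * z) := hg.1.mul hz
  obtain ⟨h, rfl⟩ : ∃ h, g * z * h = z' :=
    ⟨(g * z)⁻¹ * z', mul_nonsing_inv_cancel_left _ _ ((isUnit_iff_isUnit_det _).1 hgz)⟩
  have hh : IsUnit h := isUnit_of_mul_isUnit_right hz'
  rw [← coboundary_mul_left, coboundary_mul_right_eq_iff hgz hh, ← Matrix.ext_iff] at hx
  refine ⟨h, ⟨hh, hx⟩, ?_⟩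
  conv_rhs => rw [← hg.2]
  simp only [transpose_mul, Matrix.mul_assoc]

theorem orbSG_coboundary_iff (h2 : (2 : E) ≠ 0) (hj : IsUnit j) (hjs : j.IsSymm) (hz : IsUnit z)
    (hz' : IsUnit z') (hy : (zᵀ * j * z).map σ = zᵀ * j * z) :
    orbSG σ j (coboundary σ z) (coboundary σ z') ↔ orbYF σ (zᵀ * j * z) (z'ᵀ * j * z') := by
  constructor
  · rintro ⟨g, hg, -, hx⟩
    exact orbYF_of_coboundary_eq hz hz' hg hx
  rintro ⟨h, ⟨hh, hσh⟩, hzh⟩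
  replace hσh : h.map σ = h := Matrix.ext hσh
  obtain ⟨g, hg, hgz, hgx⟩ := exists_Gj_of_transpose_mul_mul_eq hz hz' hh hσh hzh
  rcases hg.det_eq_one_or_eq_neg_one hj with hdet | hdet
  · exact ⟨g, hg, hdet, hgx⟩
  have : Nonempty (Fin n) := not_isEmpty_iff.1 fun _ =>
    h2 (by linear_combination det_isEmpty.symm.trans hdet)
  have hysymm : (zᵀ * j * z).IsSymm := by
    simp only [IsSymm, transpose_mul, transpose_transpose, hjs.eq, Matrix.mul_assoc]
  have hyU : IsUnit (zᵀ * j * z) := (((isUnit_transpose z).2 hz).mul hj).mul hz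
  obtain ⟨h', hh', hσh', hzh', hdet'⟩ :=
    exists_fixed_transpose_mul_mul_eq_det_eq_neg h2 hysymm hyU.ne_zero hy hh hσh hzh
  obtain ⟨g', hg', hgz', hgx'⟩ := exists_Gj_of_transpose_mul_mul_eq hz hz' hh' hσh' hzh'
  refine ⟨g', hg', ?_, hgx'⟩
  have hzh0 : (z * h).det ≠ 0 := ((isUnit_iff_isUnit_det _).1 (hz.mul hh)).ne_zero
  have hdets : g'.det * (z * h').det = g.det * (z * h).det := by
    rw [← det_mul, hgz', ← hgz, det_mul]
  rw [det_mul] at hdets hzh0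
  rw [det_mul, hdet', hdet] at hdets
  exact mul_right_cancel₀ hzh0 (by linear_combination -hdets)

end Orbits

end OrthPair

theorem stmt_9_general (E : Type) [Field E] (σ : E →+* E) (hσ : Function.Involutive σ)
    (ι : E) (hι1 : σ ι ≠ ι) (hι2 : σ (ι * ι) = ι * ι)
    (n : ℕ) (j : Matrix (Fin n) (Fin n) E)
    (hjF : ∀ a b, σ (j a b) = j a b) (hjU : IsUnit j) (hjsym : jᵀ = j) :
    (∀ x, Xj σ j x → ∃ z, IsUnit z ∧ x = z * (z.map σ)⁻¹) ∧
    (∀ x z, SXj σ j x → IsUnit z → x = z * (z.map σ)⁻¹ →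
      σ z.det = z.det ∧ (∀ a b, σ ((zᵀ * j * z) a b) = (zᵀ * j * z) a b)) ∧
    (∀ x x' z z', SXj σ j x → SXj σ j x' → IsUnit z → IsUnit z' →
      x = z * (z.map σ)⁻¹ → x' = z' * (z'.map σ)⁻¹ →
      (orbSG σ j x x' ↔ orbYF σ (zᵀ * j * z) (z'ᵀ * j * z'))) ∧
    (∀ y, (∃ g, IsUnit g ∧ σ g.det = g.det ∧ y = gᵀ * j * g) →
      IsUnit y → yᵀ = y → (∀ a b, σ (y a b) = y a b) →
      ∃ z, IsUnit z ∧ y = zᵀ * j * z ∧ SXj σ j (z * (z.map σ)⁻¹)) ∧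
    (∀ x z, Xj σ j x → x.det ≠ 1 → IsUnit z → x = z * (z.map σ)⁻¹ →
      (∃ c, σ c = c ∧ c ≠ 0 ∧ z.det = ι * c) ∧
      (∀ a b, σ ((zᵀ * j * z) a b) = (zᵀ * j * z) a b)) ∧
    (∀ x x' z z', Xj σ j x → x.det ≠ 1 → Xj σ j x' → x'.det ≠ 1 →
      IsUnit z → IsUnit z' →
      x = z * (z.map σ)⁻¹ → x' = z' * (z'.map σ)⁻¹ →
      (orbSG σ j x x' ↔ orbYF σ (zᵀ * j * z) (z'ᵀ * j * z'))) ∧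
    (∀ y, (∃ g, IsUnit g ∧ (∃ c, σ c = c ∧ c ≠ 0 ∧ g.det = ι * c) ∧ y = gᵀ * j * g) →
      IsUnit y → yᵀ = y → (∀ a b, σ (y a b) = y a b) →
      ∃ z, IsUnit z ∧ y = zᵀ * j * z ∧
        Xj σ j (z * (z.map σ)⁻¹) ∧ (z * (z.map σ)⁻¹).det ≠ 1) := by
  have hι : σ ι = -ι := by
    rw [map_mul] at hι2
    exact (mul_self_eq_mul_self_iff.1 hι2).resolve_left hι1
  have h2 : (2 : E) ≠ 0 := fun h2 => hι1 (by linear_combination hι - ι * h2)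
  have hι0 : ι ≠ 0 := fun h => hι1 (by rw [h, map_zero])
  have hj : j.map σ = j := Matrix.ext hjF
  have mem_Xj_iff {z} (hz : IsUnit z) := Xj_coboundary_iff hσ hj hz
  have orbit_iff {z z'} (hx : Xj σ j (coboundary σ z)) (hz : IsUnit z) (hz' : IsUnit z') :=
    orbSG_coboundary_iff h2 hjU hjsym hz hz' (Matrix.ext ((mem_Xj_iff hz).1 hx))
  refine ⟨fun x hx => exists_isUnit_eq_coboundary hσ hι1 hx.2, ?_, ?_, ?_, ?_, ?_, ?_⟩
  · rintro _ z ⟨hx, hdet⟩ hz rfl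
    exact ⟨(det_coboundary_eq_one_iff hz).1 hdet, (mem_Xj_iff hz).1 hx⟩
  · rintro _ _ z z' ⟨hx, -⟩ - hz hz' rfl rfl
    exact orbit_iff hx hz hz'
  · rintro _ ⟨z, hz, hdet, rfl⟩ - - hy
    exact ⟨z, hz, rfl, (mem_Xj_iff hz).2 hy, (det_coboundary_eq_one_iff hz).2 hdet⟩
  · rintro _ z hx hdet hz rfl
    exact ⟨(hx.det_coboundary_ne_one_iff h2 hι hι0 hjU hz).1 hdet, (mem_Xj_iff hz).1 hx⟩
  · rintro _ _ z z' hx - - - hz hz' rfl rfl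
    exact orbit_iff hx hz hz'
  · rintro _ ⟨z, hz, hdet, rfl⟩ - - hy
    have hx := (mem_Xj_iff hz).2 hy
    exact ⟨z, hz, rfl, hx, (hx.det_coboundary_ne_one_iff h2 hι hι0 hjU hz).2 hdet⟩

/-- In the orthogonal case, the orbit correspondence sending `G^j(E)·x` to
`(zᵀ j z) ⋆ GL_n(F)`, where `x = z·σ(z)⁻¹`, restricts to (i) a bijection between the
`SG^j(E)`-orbits in `SX^j` and the `GL_n(F)`-orbits in `(j ⋆ GL_n^F(E)) ∩ Y_n(F)`, and
(ii) a bijection between the `SG^j(E)`-orbits in `X^j \ SX^j` and the `GL_n(F)`-orbits in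
`(j ⋆ GL_n^{ιF}(E)) ∩ Y_n(F)`.  Here `GL_n^F(E)` (resp. `GL_n^{ιF}(E)`) is the set of
`g ∈ GL_n(E)` with `det g ∈ F^×` (resp. `det g ∈ ι·F^×`), `F` being the fixed field of
`σ`. -/
theorem stmt_9 (p : ℕ) [Fact p.Prime]
    (E : Type) [Field E] [Algebra ℚ_[p] E] [FiniteDimensional ℚ_[p] E]
    (σ : E ≃ₐ[ℚ_[p]] E) (hσ1 : σ ≠ 1) (hσ2 : σ * σ = 1)
    (ι : E) (hι1 : σ ι ≠ ι) (hι2 : σ (ι * ι) = ι * ι)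
    (n : ℕ) (hn : 1 ≤ n)
    (j : Matrix (Fin n) (Fin n) E)
    (hjF : ∀ a b, σ (j a b) = j a b) (hjU : IsUnit j) (hjsym : jᵀ = j) :
    -- every x ∈ X^j is of the form z·σ(z)⁻¹
    (∀ x, Xj ⇑σ j x → ∃ z, IsUnit z ∧ x = z * (z.map ⇑σ)⁻¹) ∧
    -- (i) well-definedness: for x ∈ SX^j the image lies in (j ⋆ GL_n^F(E)) ∩ Y_n(F)
    (∀ x z, SXj ⇑σ j x → IsUnit z → x = z * (z.map ⇑σ)⁻¹ →
      σ z.det = z.det ∧ (∀ a b, σ ((zᵀ * j * z) a b) = (zᵀ * j * z) a b)) ∧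
    -- (i) injectivity on orbits
    (∀ x x' z z', SXj ⇑σ j x → SXj ⇑σ j x' → IsUnit z → IsUnit z' →
      x = z * (z.map ⇑σ)⁻¹ → x' = z' * (z'.map ⇑σ)⁻¹ →
      (orbSG ⇑σ j x x' ↔ orbYF ⇑σ (zᵀ * j * z) (z'ᵀ * j * z'))) ∧
    -- (i) surjectivity
    (∀ y, (∃ g, IsUnit g ∧ σ g.det = g.det ∧ y = gᵀ * j * g) →
      IsUnit y → yᵀ = y → (∀ a b, σ (y a b) = y a b) →
      ∃ z, IsUnit z ∧ y = zᵀ * j * z ∧ SXj ⇑σ j (z * (z.map ⇑σ)⁻¹)) ∧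
    -- (ii) well-definedness: for x ∈ X^j \ SX^j the image lies in (j ⋆ GL_n^{ιF}(E)) ∩ Y_n(F)
    (∀ x z, Xj ⇑σ j x → x.det ≠ 1 → IsUnit z → x = z * (z.map ⇑σ)⁻¹ →
      (∃ c, σ c = c ∧ c ≠ 0 ∧ z.det = ι * c) ∧
      (∀ a b, σ ((zᵀ * j * z) a b) = (zᵀ * j * z) a b)) ∧
    -- (ii) injectivity on orbits
    (∀ x x' z z', Xj ⇑σ j x → x.det ≠ 1 → Xj ⇑σ j x' → x'.det ≠ 1 →
      IsUnit z → IsUnit z' →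
      x = z * (z.map ⇑σ)⁻¹ → x' = z' * (z'.map ⇑σ)⁻¹ →
      (orbSG ⇑σ j x x' ↔ orbYF ⇑σ (zᵀ * j * z) (z'ᵀ * j * z'))) ∧
    -- (ii) surjectivity
    (∀ y, (∃ g, IsUnit g ∧ (∃ c, σ c = c ∧ c ≠ 0 ∧ g.det = ι * c) ∧ y = gᵀ * j * g) →
      IsUnit y → yᵀ = y → (∀ a b, σ (y a b) = y a b) →
      ∃ z, IsUnit z ∧ y = zᵀ * j * z ∧
        Xj ⇑σ j (z * (z.map ⇑σ)⁻¹) ∧ (z * (z.map ⇑σ)⁻¹).det ≠ 1) := by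
  exact stmt_9_general E (σ : E →+* E) (fun a => DFunLike.congr_fun hσ2 a) ι hι1 hι2 n j
    hjF hjU hjsym
end
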